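/- Let X and Y be trees, p ∈ X and q ∈ Y. If C(p,X) is homeomorphic to C(q,Y), then ord(p,X) = ord(q,Y). -/

import Mathlib

open Set Topology TopologicalSpace

universe u

/-- `IndDimLE m α t` means that the small inductive dimension of `α` is at most `m - 1`.
In particular `IndDimLE 0 α t` means `α` is empty (dimension `-1`). -/
def IndDimLE : ℕ → (α : Type u) → TopologicalSpace α → Prop
  | 0, α, _ => IsEmpty α
  | n + 1, α, t =>
      ∀ (x : α) (U : Set α), @IsOpen α t U → x ∈ U →
        ∃ V : Set α, @IsOpen α t V ∧ x ∈ V ∧ V ⊆ U ∧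
          IndDimLE n (↥(@frontier α t V))
            (TopologicalSpace.induced (Subtype.val : ↥(@frontier α t V) → α) t)

/-- The small inductive dimension of a topological space, as an integer
(with junk value if the dimension is infinite). -/
noncomputable def indDim (α : Type u) [t : TopologicalSpace α] : ℤ :=
  sInf {d : ℤ | ∃ m : ℕ, d = (m : ℤ) - 1 ∧ IndDimLE m α t}

section Defs

variable {X : Type u} [TopologicalSpace X]

/-- `A` is an arc, i.e. homeomorphic to `[0,1]`. -/
def IsArcSet (A : Set X) : Prop :=
  Nonempty (↥A ≃ₜ ↥(Icc (0 : ℝ) 1))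

/-- `A` is an arc with end points `a` and `b`. -/
def IsArcFromTo (A : Set X) (a b : X) : Prop :=
  ∃ h : ↥(Icc (0 : ℝ) 1) ≃ₜ ↥A,
    ((h ⟨0, by norm_num⟩ : ↥A) : X) = a ∧ ((h ⟨1, by norm_num⟩ : ↥A) : X) = b

/-- `a` is an end point of the arc `A`. -/
def IsArcEndpoint (A : Set X) (a : X) : Prop := ∃ b, IsArcFromTo A a b

/-- The points of the arc `A` which are not end points of `A`. -/
def arcInterior (A : Set X) : Set X := {x ∈ A | ¬ IsArcEndpoint A x}

/-- `N` is a simple `n`-od with vertex `v`: the union of `n` arcs emanating from `v`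
and otherwise disjoint from each other. -/
def IsSimpleNod (n : ℕ) (N : Set X) (v : X) : Prop :=
  0 < n ∧ ∃ A : Fin n → Set X, (∀ i, IsArcSet (A i)) ∧ (⋃ i, A i) = N ∧
    (∀ i, IsArcEndpoint (A i) v) ∧ ∀ i j, i ≠ j → A i ∩ A j = {v}

/-- `x` has order `n` in the subspace `S`: `x` has a closed neighborhood in `S`
which is a simple `n`-od having `x` as the vertex. -/
def HasOrdIn (S : Set X) (x : X) (n : ℕ) : Prop :=
  ∃ N : Set X, N ⊆ S ∧ IsClosed N ∧ (∃ U : Set X, IsOpen U ∧ x ∈ U ∧ U ∩ S ⊆ N) ∧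
    IsSimpleNod n N x

/-- The order of `x` in the subspace `S`. -/
noncomputable def ordIn (S : Set X) (x : X) : ℕ := sInf {n | HasOrdIn S x n}

/-- End points (order `1`) of the subspace `S`. -/
def endPtsIn (S : Set X) : Set X := {x ∈ S | HasOrdIn S x 1}

/-- Ordinary points (order `2`) of the subspace `S`. -/
def ordinaryIn (S : Set X) : Set X := {x ∈ S | HasOrdIn S x 2}

/-- Ramification points (order `≥ 3`) of the subspace `S`. -/
def ramifIn (S : Set X) : Set X := {x ∈ S | ∃ n, 3 ≤ n ∧ HasOrdIn S x n}

/-- Vertices (points of order `≠ 2`) of the subspace `S`. -/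
def verticesIn (S : Set X) : Set X := {x ∈ S | ¬ HasOrdIn S x 2}

/-- `e` is an edge of the subspace `S`: an arc joining two vertices of `S` and
containing no more than two vertices of `S`. -/
def IsEdgeIn (S : Set X) (e : Set X) : Prop :=
  e ⊆ S ∧ ∃ a b, a ∈ verticesIn S ∧ b ∈ verticesIn S ∧ IsArcFromTo e a b ∧
    e ∩ verticesIn S ⊆ {a, b}

/-- `S` is a simple closed curve. -/
def IsSimpleClosedCurve (S : Set X) : Prop := Nonempty (↥S ≃ₜ Circle)

end Defs

/-- `X` is an arc (as a space). -/
def IsArcSpace (X : Type u) [TopologicalSpace X] : Prop :=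
  Nonempty (X ≃ₜ ↥(Icc (0 : ℝ) 1))

/-- `X` is a finite graph: a continuum which is the union of finitely many arcs, any two
of which are either disjoint or intersect only in one or both of their end points. -/
def IsFiniteGraph (X : Type u) [MetricSpace X] : Prop :=
  CompactSpace X ∧ ConnectedSpace X ∧ Nonempty X ∧
    ∃ 𝒜 : Finset (Set X), (∀ A ∈ 𝒜, IsArcSet A) ∧ ⋃₀ (𝒜 : Set (Set X)) = univ ∧
      ∀ A ∈ 𝒜, ∀ B ∈ 𝒜, A ≠ B → ∀ x ∈ A ∩ B, IsArcEndpoint A x ∧ IsArcEndpoint B x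

/-- `X` is a tree: a finite graph without simple closed curves. -/
def IsTree (X : Type u) [MetricSpace X] : Prop :=
  IsFiniteGraph X ∧ ∀ S : Set X, ¬ IsSimpleClosedCurve S

/-- `X` is neither an arc nor a simple `n`-od. -/
def NotArcNotNod (X : Type u) [MetricSpace X] : Prop :=
  ¬ IsArcSpace X ∧ ∀ (n : ℕ) (v : X), ¬ IsSimpleNod n (univ : Set X) v

/-- `T(X)`: the union of all edges of `X` disjoint from the set of end points of `X`. -/
def Tpart (X : Type u) [MetricSpace X] : Set X :=
  ⋃₀ {e : Set X | IsEdgeIn (univ : Set X) e ∧ e ∩ endPtsIn (univ : Set X) = ∅}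

/-- `Sub_p(T(X))`: subtrees of `T(X)` containing `p` (subcontinua of `T(X)` all of whose
edges are edges of `X`). -/
def SubTreesP (X : Type u) [MetricSpace X] (p : X) : Set (Set X) :=
  {Y | Y ⊆ Tpart X ∧ p ∈ Y ∧ IsCompact Y ∧ IsConnected Y ∧
    ∀ e : Set X, IsEdgeIn Y e → IsEdgeIn (univ : Set X) e}

/-- Subtrees of the tree `X`. -/
def Subtrees (X : Type u) [MetricSpace X] : Set (Set X) :=
  {Y | IsCompact Y ∧ IsConnected Y ∧
    ∀ e : Set X, IsEdgeIn Y e → IsEdgeIn (univ : Set X) e}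

/-- The smallest subtree of `X` containing `a` and `b`. -/
def treeHull (X : Type u) [MetricSpace X] (a b : X) : Set X :=
  ⋂₀ {Y | Y ∈ Subtrees X ∧ a ∈ Y ∧ b ∈ Y}

/-- The hyperspace `C(p,X)` of subcontinua of `X` containing `p`,
with the Hausdorff metric. -/
def CP (X : Type u) [MetricSpace X] (p : X) : Type u :=
  {A : NonemptyCompacts X // IsConnected (A : Set X) ∧ p ∈ (A : Set X)}

noncomputable instance (X : Type u) [MetricSpace X] (p : X) : MetricSpace (CP X p) :=
  inferInstanceAs (MetricSpace
    {A : NonemptyCompacts X // IsConnected (A : Set X) ∧ p ∈ (A : Set X)})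

/-- The underlying subset of `X` of an element of `C(p,X)`. -/
def CP.set {X : Type u} [MetricSpace X] {p : X} (A : CP X p) : Set X := (A.1 : Set X)

/-- `U_n(X)`: elements of `C(p,X)` having a neighborhood in `C(p,X)` homeomorphic to
the `n`-cell `[0,1]^n`. -/
def Un (X : Type u) [MetricSpace X] (p : X) (n : ℕ) : Set (CP X p) :=
  {A | ∃ N : Set (CP X p), N ∈ 𝓝 A ∧ Nonempty (↥N ≃ₜ (Fin n → ↥(Icc (0 : ℝ) 1)))}

/-- `𝒰(X) = ⋃ₙ U_n(X)`. -/
def UnionUn (X : Type u) [MetricSpace X] (p : X) : Set (CP X p) := ⋃ n : ℕ, Un X p n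

/-- The edges of `X` which are not edges of `Y` and intersect `Y`. -/
def incidentE (X : Type u) [MetricSpace X] (Y : Set X) : Set (Set X) :=
  {e | IsEdgeIn (univ : Set X) e ∧ ¬ IsEdgeIn Y e ∧ (e ∩ Y).Nonempty}

/-- `U_Y`: elements of `C(p,X)` of the form `Y` together with exactly one interior point
of each edge of `X` incident on `Y`. -/
def UofY (X : Type u) [MetricSpace X] (p : X) (Y : Set X) : Set (CP X p) :=
  {B | ∃ f : ↥(incidentE X Y) → X,
    (∀ e : ↥(incidentE X Y), f e ∈ arcInterior (e : Set X)) ∧ B.set = Y ∪ range f}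

/-- `(X,p)` has unique hyperspace `C(p,X)` in the class of trees. -/
def UniqueHyperspaceInTrees (X : Type u) [MetricSpace X] (p : X) : Prop :=
  ∀ (Y : Type u) [MetricSpace Y], IsTree Y → ∀ q : Y,
    Nonempty (CP X p ≃ₜ CP Y q) → ∃ 𝔥 : X ≃ₜ Y, 𝔥 p = q

/-!
If `p` has order `n`, then `C(p, X)` has a nonempty open subset that injects continuously into
`ℝⁿ`: a subcontinuum through `p` contained in the open part of an `n`-od around `p` is determined
by how far it reaches along each of the `n` legs. If `q` splits the tree `Y` into `m` branches,
then every nonempty open subset of `C(q, Y)` contains a continuous image of `[0,1]^m` in which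
opposite faces stay disjoint: the parts of a subcontinuum in the different branches move
independently, and none of them is rigid because `C(q, Y)` is path connected. Composing the two
maps along a homeomorphism gives a map `[0,1]^m → ℝⁿ` identifying no points of opposite faces,
so `m ≤ n` by a consequence of the Poincaré–Miranda theorem. Exchanging the roles of `X` and `Y`
gives equality. The Poincaré–Miranda theorem comes from the fact that a map equal to the identity
outside a ball has a zero; this holds because the integral of `det (s + g')` over a ball is a
polynomial in `s` which the change of variables formula computes for large `s`.
-/

section NoRetraction

open Metric Module MeasureTheory
open scoped ContDiff

theorem eval_eq_sum_lagrange_basis {ι F : Type*} [DecidableEq ι] [Field F] {s : Finset ι}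
    {v : ι → F} (hv : InjOn v s) {q : Polynomial F} (hq : q.degree < s.card) (t : F) :
    q.eval t = ∑ i ∈ s, (Lagrange.basis s v i).eval t * q.eval (v i) := by
  conv_lhs => rw [Lagrange.eq_interpolate hv hq]
  rw [Lagrange.interpolate_apply, Polynomial.eval_finsetSum]
  exact Finset.sum_congr rfl fun i _ => by rw [Polynomial.eval_mul, Polynomial.eval_C, mul_comm]

theorem exists_nodes_eval_eq_sum {F : Type*} [Field F] {S : Set F} (hS : S.Infinite) (d : ℕ)
    (t : F) : ∃ v w : Fin (d + 1) → F, (∀ i, v i ∈ S) ∧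
      ∀ q : Polynomial F, q.natDegree ≤ d → q.eval t = ∑ i, w i * q.eval (v i) := by
  have : Infinite S := hS.to_subtype
  let v : Fin (d + 1) ↪ S := (Fin.valEmbedding).trans (Infinite.natEmbedding S)
  refine ⟨fun i => v i, _, fun i => (v i).2, fun q hq => eval_eq_sum_lagrange_basis
    (Subtype.val_injective.comp v.injective).injOn ?_ t⟩
  rw [Finset.card_univ, Fintype.card_fin]
  exact (Polynomial.degree_le_of_natDegree_le hq).trans_lt (by exact_mod_cast d.lt_succ_self)

section Normed

variable {E : Type*} [NormedAddCommGroup E] [NormedSpace ℝ E]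

theorem det_one_add_pos_of_norm_lt_one [FiniteDimensional ℝ E] {A : E →L[ℝ] E} (hA : ‖A‖ < 1) :
    0 < (1 + A).det := by
  have : CompleteSpace E := FiniteDimensional.complete ℝ E
  have hdet : ∀ t ∈ Icc (0 : ℝ) 1, (1 + t • A).det ≠ 0 := by
    intro t ht
    have hnorm : ‖-(t • A)‖ < 1 := by
      rw [norm_neg, norm_smul, Real.norm_of_nonneg ht.1]
      exact (mul_le_of_le_one_left (norm_nonneg A) ht.2).trans_lt hA
    have hunit : IsUnit (1 + t • A) := by simpa using isUnit_one_sub_of_norm_lt_one hnorm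
    exact (LinearMap.isUnit_iff_isUnit_det _).1
      (hunit.map (ContinuousLinearMap.toLinearMapRingHom (R₁ := ℝ) (M₁ := E))) |>.ne_zero
  have hcont : ContinuousOn (fun t : ℝ => (1 + t • A).det) (Icc 0 1) :=
    (ContinuousLinearMap.continuous_det.comp (by fun_prop)).continuousOn
  by_contra! hneg
  obtain ⟨t, ht, hzero⟩ := intermediate_value_Icc' zero_le_one hcont
    (show (0 : ℝ) ∈ _ from ⟨by simpa using hneg, by simp [ContinuousLinearMap.det]⟩)
  exact hdet t ht hzero

theorem eval_charpoly_neg [FiniteDimensional ℝ E] (A : E →L[ℝ] E) (s : ℝ) :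
    (-(A : E →ₗ[ℝ] E)).charpoly.eval s = (s • (1 : E →L[ℝ] E) + A).det := by
  rw [LinearMap.eval_charpoly, ContinuousLinearMap.det]
  congr 1
  ext v
  simp [Algebra.algebraMap_eq_smul_one]

theorem det_smul_one_add {s : ℝ} (hs : s ≠ 0) (A : E →L[ℝ] E) :
    (s • (1 : E →L[ℝ] E) + A).det = s ^ finrank ℝ E * (1 + s⁻¹ • A).det := by
  rw [ContinuousLinearMap.det, ContinuousLinearMap.det, ← LinearMap.det_smul]
  congr 1
  ext v
  simp [smul_smul, hs]

/-- The integrand is polynomial in `s`, so it may be interpolated at large nodes; this avoids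
integrating the coefficients of the polynomial. -/
theorem setIntegral_det_smul_one_add_eq [FiniteDimensional ℝ E] {α : Type*} [TopologicalSpace α]
    [MeasurableSpace α] [OpensMeasurableSpace α] [T2Space α] {μ : Measure α}
    [IsFiniteMeasureOnCompacts μ] {B : Set α} (hB : IsCompact B) {A : α → E →L[ℝ] E}
    (hA : ContinuousOn A B) {a c : ℝ}
    (h : ∀ s > a, ∫ x in B, (s • (1 : E →L[ℝ] E) + A x).det ∂μ = s ^ finrank ℝ E * c) (t : ℝ) :
    ∫ x in B, (t • (1 : E →L[ℝ] E) + A x).det ∂μ = t ^ finrank ℝ E * c := by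
  obtain ⟨v, w, hv, hw⟩ := exists_nodes_eval_eq_sum (Ioi_infinite a) (finrank ℝ E) t
  have hint : ∀ i, IntegrableOn (fun x => (v i • (1 : E →L[ℝ] E) + A x).det) B μ := fun i =>
    (ContinuousLinearMap.continuous_det.comp_continuousOn
      (continuousOn_const.add hA)).integrableOn_compact hB
  have hdet : ∀ x, (t • (1 : E →L[ℝ] E) + A x).det =
      ∑ i, w i * (v i • (1 : E →L[ℝ] E) + A x).det := by
    intro x
    simpa only [eval_charpoly_neg] using hw _ (LinearMap.charpoly_natDegree (-(A x : E →ₗ[ℝ] E))).le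
  have hpow := hw (Polynomial.X ^ finrank ℝ E) (by simp)
  simp only [Polynomial.eval_pow, Polynomial.eval_X] at hpow
  calc ∫ x in B, (t • (1 : E →L[ℝ] E) + A x).det ∂μ
      = ∑ i, w i * ∫ x in B, (v i • (1 : E →L[ℝ] E) + A x).det ∂μ := by
        simp only [hdet]
        rw [integral_finsetSum _ fun i _ => (hint i).const_mul (w i)]
        simp only [integral_const_mul]
    _ = (∑ i, w i * v i ^ finrank ℝ E) * c := by
        simp only [h _ (hv _), Finset.sum_mul, mul_assoc]
    _ = t ^ finrank ℝ E * c := by rw [hpow]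

theorem lipschitzWith_indicator_closedBall {E' : Type*} [SeminormedAddCommGroup E'] {R : ℝ}
    {K : NNReal} {g : E → E'}
    (hg : LipschitzOnWith K g (closedBall 0 R)) (h0 : ∀ x, ‖x‖ = R → g x = 0) :
    LipschitzWith K ((closedBall (0 : E) R).indicator g) := by
  have hcross : ∀ x ∈ closedBall (0 : E) R, ∀ y ∉ closedBall (0 : E) R,
      dist (g x) 0 ≤ K * dist x y := by
    intro x hx y hy
    rw [mem_closedBall_zero_iff] at hx hy
    obtain ⟨z, hz, hzR⟩ := (convex_segment x y).isPreconnected.intermediate_value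
      (left_mem_segment ℝ x y) (right_mem_segment ℝ x y) continuous_norm.continuousOn
      ⟨hx, (not_le.1 hy).le⟩
    calc dist (g x) 0 = dist (g x) (g z) := by rw [h0 z hzR]
      _ ≤ K * dist x z := hg.dist_le_mul x (by simpa using hx) z (by simp [hzR])
      _ ≤ K * dist x y := by
        gcongr
        linarith [dist_add_dist_of_mem_segment hz, dist_nonneg (x := z) (y := y)]
  refine LipschitzWith.of_dist_le_mul fun x y => ?_
  by_cases hx : x ∈ closedBall (0 : E) R <;> by_cases hy : y ∈ closedBall (0 : E) R
  · rw [indicator_of_mem hx, indicator_of_mem hy]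
    exact hg.dist_le_mul x hx y hy
  · rw [indicator_of_mem hx, indicator_of_notMem hy]
    exact hcross x hx y hy
  · rw [indicator_of_notMem hx, indicator_of_mem hy, dist_comm, dist_comm x]
    exact hcross y hy x hx
  · rw [indicator_of_notMem hx, indicator_of_notMem hy, dist_self]
    positivity

theorem bijOn_closedBall_of_lipschitzOnWith_sub_id [CompleteSpace E] {R : ℝ} {K : NNReal}
    {f : E → E} (hf : MapsTo f (closedBall 0 R) (closedBall 0 R)) (h0 : ∀ x, ‖x‖ = R → f x = x)
    (hL : LipschitzOnWith K (fun x => f x - x) (closedBall 0 R)) (hK : K < 1) :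
    BijOn f (closedBall 0 R) (closedBall 0 R) := by
  set g := (closedBall (0 : E) R).indicator (fun x => f x - x) with hg
  have hgL : LipschitzWith K g :=
    lipschitzWith_indicator_closedBall hL fun x hx => by rw [h0 x hx, sub_self]
  refine ⟨hf, fun x hx y hy hxy => ?_, fun y hy => ?_⟩
  · have hle : dist x y ≤ K * dist x y := by
      calc dist x y = dist (f x - x) (f y - y) := by rw [hxy, dist_sub_left]
        _ ≤ K * dist x y := hL.dist_le_mul x hx y hy
    have hK' : (K : ℝ) < 1 := hK
    exact dist_le_zero.1 (by nlinarith only [hle, hK', dist_nonneg (x := x) (y := y)])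
  · have hcontr : ContractingWith K fun x => y - g x :=
      ⟨hK, LipschitzWith.of_dist_le_mul fun a b => by
        rw [dist_sub_left]
        exact hgL.dist_le_mul a b⟩
    set x := ContractingWith.fixedPoint _ hcontr
    have hx : y - g x = x := hcontr.fixedPoint_isFixedPt
    have hxB : x ∈ closedBall (0 : E) R := by
      by_contra hxB
      rw [hg, indicator_of_notMem hxB, sub_zero] at hx
      exact hxB (hx ▸ hy)
    refine ⟨x, hxB, ?_⟩
    rw [hg, indicator_of_mem hxB, sub_sub_eq_add_sub, sub_eq_iff_eq_add, add_comm x] at hx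
    exact (add_right_cancel hx).symm

variable [FiniteDimensional ℝ E] [MeasurableSpace E] [BorelSpace E] {μ : Measure E}
  [μ.IsAddHaarMeasure]

theorem setIntegral_det_eq_measureReal_of_bijOn {s t : Set E} (hs : MeasurableSet s) {f : E → E}
    {f' : E → E →L[ℝ] E} (hf' : ∀ x ∈ s, HasFDerivWithinAt f (f' x) s x) (hf : BijOn f s t)
    (hdet : ∀ x ∈ s, 0 ≤ (f' x).det) : ∫ x in s, (f' x).det ∂μ = μ.real t := by
  have hint := integral_image_eq_integral_abs_det_fderiv_smul μ hs hf' hf.injOn fun _ => (1 : ℝ)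
  rw [hf.image_eq] at hint
  simpa [setIntegral_congr_fun hs fun x hx => abs_of_nonneg (hdet x hx)] using hint.symm

theorem setIntegral_det_smul_one_add_fderiv_of_lt {R s : ℝ} {K : NNReal} {g : E → E}
    {g' : E → E →L[ℝ] E}
    (hg : ∀ x ∈ closedBall (0 : E) R, HasFDerivWithinAt g (g' x) (closedBall 0 R) x)
    (hK : ∀ x ∈ closedBall (0 : E) R, ‖g' x‖ ≤ K)
    (hmap : MapsTo (fun x => x + g x) (closedBall 0 R) (closedBall 0 R))
    (h0 : ∀ x, ‖x‖ = R → g x = 0) (hs : max 1 (K : ℝ) < s) :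
    ∫ x in closedBall 0 R, (s • (1 : E →L[ℝ] E) + g' x).det ∂μ
      = s ^ finrank ℝ E * μ.real (closedBall 0 R) := by
  obtain ⟨hs1, hKs⟩ := max_lt_iff.1 hs
  have hs0 : 0 < s := zero_lt_one.trans hs1
  have hinv : ‖s⁻¹‖ = s⁻¹ := Real.norm_of_nonneg (inv_nonneg.2 hs0.le)
  have hbij : BijOn (fun x => x + s⁻¹ • g x) (closedBall 0 R) (closedBall (0 : E) R) := by
    refine bijOn_closedBall_of_lipschitzOnWith_sub_id (K := ‖s⁻¹‖₊ * K) (fun x hx => ?_)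
      (fun x hx => by simp [h0 x hx]) ?_ ?_
    · convert convex_closedBall (0 : E) R hx (hmap hx)
        (sub_nonneg.2 (inv_le_one_of_one_le₀ hs1.le)) (inv_nonneg.2 hs0.le)
        (sub_add_cancel 1 s⁻¹) using 1
      module
    · simp only [add_sub_cancel_left]
      exact (lipschitzWith_smul s⁻¹).comp_lipschitzOnWith
        ((convex_closedBall 0 R).lipschitzOnWith_of_nnnorm_hasFDerivWithin_le hg hK)
    · rw [← NNReal.coe_lt_coe, NNReal.coe_mul, coe_nnnorm, hinv, NNReal.coe_one,
        inv_mul_lt_iff₀ hs0, mul_one]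
      exact hKs
  have hpos : ∀ x ∈ closedBall (0 : E) R, 0 < (1 + s⁻¹ • g' x).det := by
    intro x hx
    refine det_one_add_pos_of_norm_lt_one ?_
    rw [norm_smul, hinv, inv_mul_lt_iff₀ hs0, mul_one]
    exact (hK x hx).trans_lt hKs
  simp only [det_smul_one_add hs0.ne', integral_const_mul]
  congr 1
  exact setIntegral_det_eq_measureReal_of_bijOn measurableSet_closedBall
    (fun x hx => (hasFDerivWithinAt_id x _).add ((hg x hx).const_smul s⁻¹)) hbij
    fun x hx => (hpos x hx).le

theorem setIntegral_det_fderiv_closedBall {R : ℝ} {f : E → E} {f' : E → E →L[ℝ] E}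
    (hf : ∀ x ∈ closedBall (0 : E) R, HasFDerivWithinAt f (f' x) (closedBall 0 R) x)
    (hf' : ContinuousOn f' (closedBall 0 R))
    (hmap : MapsTo f (closedBall 0 R) (closedBall 0 R)) (h0 : ∀ x, ‖x‖ = R → f x = x) :
    ∫ x in closedBall 0 R, (f' x).det ∂μ = μ.real (closedBall 0 R) := by
  have hB : IsCompact (closedBall (0 : E) R) := isCompact_closedBall 0 R
  have hcont : ContinuousOn (fun x => f' x - 1) (closedBall 0 R) := hf'.sub continuousOn_const
  obtain ⟨C, hC⟩ := hB.exists_bound_of_continuousOn hcont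
  have hlarge : ∀ s > max 1 (C.toNNReal : ℝ),
      ∫ x in closedBall 0 R, (s • (1 : E →L[ℝ] E) + (f' x - 1)).det ∂μ
        = s ^ finrank ℝ E * μ.real (closedBall 0 R) := fun s hs =>
    setIntegral_det_smul_one_add_fderiv_of_lt (g := fun x => f x - x)
      (fun x hx => (hf x hx).sub (hasFDerivWithinAt_id x _))
      (fun x hx => (hC x hx).trans (Real.le_coe_toNNReal C))
      (by simpa only [add_sub_cancel] using hmap) (fun x hx => sub_eq_zero.2 (h0 x hx)) hs
  simpa using setIntegral_det_smul_one_add_eq hB hcont hlarge 1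

end Normed

theorem exists_contDiff_hasCompactSupport_dist_lt {E F : Type*} [NormedAddCommGroup E]
    [NormedSpace ℝ E] [FiniteDimensional ℝ E] [NormedAddCommGroup F] [NormedSpace ℝ F]
    [CompleteSpace F] {f : E → F} (hsupp : HasCompactSupport f) (hf : Continuous f) {ε : ℝ}
    (hε : 0 < ε) :
    ∃ g : E → F, ContDiff ℝ ∞ g ∧ HasCompactSupport g ∧ ∀ x, dist (g x) (f x) < ε := by
  obtain ⟨δ, hδ, hfδ⟩ := Metric.uniformContinuous_iff.1
    (hsupp.uniformContinuous_of_continuous hf) (ε / 2) (half_pos hε)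
  obtain ⟨g, hg, hgf⟩ := hf.exists_contDiff_dist_le_of_forall_mem_ball_dist_le hδ
  refine ⟨g, hg, HasCompactSupport.intro (hsupp.isCompact.cthickening (r := δ)) fun x hx => ?_,
    fun x => (hgf x _ fun y hy => (hfδ hy).le).trans_lt (half_lt_self hε)⟩
  have hfar : ∀ y ∈ ball x δ, f y = 0 := fun y hy => by
    by_contra hfy
    exact hx (mem_cthickening_of_dist_le x y δ _ (subset_tsupport f hfy)
      (dist_comm y x ▸ (mem_ball.1 hy).le))
  have hfx : f x = 0 := hfar x (mem_ball_self hδ)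
  have hdist : dist (g x) (f x) ≤ 0 := hgf x 0 fun y hy => by rw [hfar y hy, hfx, dist_self]
  exact hfx ▸ dist_le_zero.1 hdist

section Inner

variable {E : Type*} [NormedAddCommGroup E] [InnerProductSpace ℝ E] [FiniteDimensional ℝ E]

theorem det_eq_zero_of_hasFDerivAt_of_norm_eq {r : E → E} {r' : E →L[ℝ] E} {x : E} {R : ℝ}
    (hR : R ≠ 0) (hr : ∀ᶠ y in 𝓝 x, ‖r y‖ = R) (h : HasFDerivAt r r' x) : r'.det = 0 := by
  by_contra hne
  have hunit : IsUnit (r' : E →ₗ[ℝ] E) :=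
    (LinearMap.isUnit_iff_isUnit_det _).2 (isUnit_iff_ne_zero.2 hne)
  obtain ⟨v, hv⟩ : ∃ v, r' v = r x := ((Module.End.isUnit_iff _).1 hunit).2 (r x)
  have hconst : HasFDerivAt (fun y => ‖r y‖ ^ 2) (0 : E →L[ℝ] ℝ) x :=
    (hasFDerivAt_const (R ^ 2) x).congr_of_eventuallyEq (hr.mono fun y hy => congrArg (· ^ 2) hy)
  have heval := congrArg (fun L : E →L[ℝ] ℝ => L v) (h.norm_sq.unique hconst)
  simp only [hv, hr.self_of_nhds, smul_apply, ContinuousLinearMap.comp_apply,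
    innerSL_apply_apply, real_inner_self_eq_norm_sq, zero_apply] at heval
  simp [hR] at heval

theorem not_contDiff_retraction_sphere {R : ℝ} (hR : 0 < R) :
    ¬ ∃ r : E → E, ContDiff ℝ 1 r ∧ (∀ x, ‖r x‖ = R) ∧ ∀ x, ‖x‖ = R → r x = x := by
  rintro ⟨r, hr, hnorm, h0⟩
  borelize E
  have hdiff : ∀ x, HasFDerivAt r (fderiv ℝ r x) x := fun x =>
    (hr.differentiable one_ne_zero x).hasFDerivAt
  have hvol := setIntegral_det_fderiv_closedBall (μ := Measure.addHaar)
    (fun x _ => (hdiff x).hasFDerivWithinAt) (hr.continuous_fderiv one_ne_zero).continuousOn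
    (fun x _ => by simp [hnorm x]) h0
  simp only [det_eq_zero_of_hasFDerivAt_of_norm_eq hR.ne' (.of_forall hnorm) (hdiff _),
    integral_zero] at hvol
  exact (ENNReal.toReal_pos (measure_closedBall_pos _ 0 hR).ne'
    (isCompact_closedBall (0 : E) R).measure_lt_top.ne).ne hvol

theorem exists_eq_zero_of_hasCompactSupport_sub_id {F : E → E} (hF : Continuous F)
    (hsupp : HasCompactSupport fun x => F x - x) : ∃ x, F x = 0 := by
  by_contra! hne
  obtain ⟨x₀, hx₀⟩ : ∃ x₀, ∀ x, ‖F x₀‖ ≤ ‖F x‖ := by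
    refine hF.norm.exists_forall_le ((tendsto_norm_cocompact_atTop (E := E)).congr' ?_)
    filter_upwards [Filter.coclosedCompact_eq_cocompact (X := E) ▸
      hasCompactSupport_iff_eventuallyEq.1 hsupp] with x hx
    rw [sub_eq_zero.1 hx]
  obtain ⟨g, hg, hgsupp, hgF⟩ :=
    exists_contDiff_hasCompactSupport_dist_lt hsupp (hF.sub continuous_id) (norm_pos_iff.2 (hne x₀))
  have hne' : ∀ x, x + g x ≠ 0 := by
    intro x hx
    have hdist := hgF x
    rw [eq_neg_of_add_eq_zero_right hx, dist_eq_norm, neg_sub_left, norm_neg,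
      sub_add_cancel] at hdist
    exact (hx₀ x).not_gt hdist
  obtain ⟨R, hR0, hR⟩ := hgsupp.isBounded.subset_closedBall_lt 0 0
  have hg0 : ∀ x, ‖x‖ = R + 1 → g x = 0 := fun x hx => by
    refine image_eq_zero_of_notMem_tsupport fun hmem => ?_
    linarith [mem_closedBall_zero_iff.1 (hR hmem)]
  have hc : ContDiff ℝ 1 fun x => x + g x := contDiff_id.add (hg.of_le (by exact_mod_cast le_top))
  refine not_contDiff_retraction_sphere (E := E) (R := R + 1) (by linarith)
    ⟨fun x => ((R + 1) / ‖x + g x‖) • (x + g x), ?_, fun x => ?_, fun x hx => ?_⟩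
  · exact (contDiff_const.div (hc.norm ℝ hne') fun x => norm_ne_zero_iff.2 (hne' x)).smul hc
  · rw [norm_smul, norm_div, norm_norm, div_mul_cancel₀ _ (norm_ne_zero_iff.2 (hne' x)),
      Real.norm_of_nonneg (by linarith)]
  · beta_reduce
    rw [hg0 x hx, add_zero, hx, div_self (by linarith), one_smul]

end Inner

theorem surjective_of_hasCompactSupport_sub_id {E : Type*} [NormedAddCommGroup E]
    [NormedSpace ℝ E] [FiniteDimensional ℝ E] {F : E → E} (hF : Continuous F)
    (hsupp : HasCompactSupport fun x => F x - x) : Function.Surjective F := by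
  intro y
  let e : EuclideanSpace ℝ (Fin (finrank ℝ E)) ≃L[ℝ] E := toEuclidean.symm
  have hconj : (fun x => e.symm (F (e x + y) - y) - x) =
      e.symm ∘ (fun x => F x - x) ∘ e.toHomeomorph.trans (Homeomorph.addRight y) := by
    funext x
    simp [sub_sub, add_comm]
  obtain ⟨x, hx⟩ := exists_eq_zero_of_hasCompactSupport_sub_id
    (F := fun x => e.symm (F (e x + y) - y)) (by fun_prop)
    (hconj ▸ (hsupp.comp_homeomorph _).comp_left (map_zero e.symm))
  exact ⟨e x + y, sub_eq_zero.1 (e.symm.map_eq_zero_iff.1 hx)⟩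

end NoRetraction

section Cube

open Module
open scoped ContDiff unitInterval

/-- The Poincaré–Miranda theorem. -/
theorem exists_eq_zero_of_nonpos_of_nonneg {ι : Type*} [Finite ι] {f : (ι → I) → ι → ℝ}
    (hf : Continuous f) (hneg : ∀ x i, x i = 0 → f x i ≤ 0) (hpos : ∀ x i, x i = 1 → 0 ≤ f x i) :
    ∃ x, f x = 0 := by
  have := Fintype.ofFinite ι
  let c : (ι → ℝ) → ι → I := fun y i => projIcc 0 1 zero_le_one (y i)
  obtain ⟨χ, hχ1, -, hχsupp, hχ⟩ := exists_continuous_one_zero_of_isCompact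
    (isCompact_univ_pi fun _ : ι => isCompact_Icc (a := (0 : ℝ)) (b := 1)) isClosed_empty
    (disjoint_empty _)
  -- A solution of `F y = 1/2` lies in the cube, where `χ = 1` and `F y = f y + 1/2`.
  let F : (ι → ℝ) → ι → ℝ := fun y => y + χ y • fun i => f (c y) i - c y i + 1 / 2
  have hF : Continuous F := by fun_prop
  have hsupp : HasCompactSupport fun y => F y - y := by
    simp only [F, add_sub_cancel_left]
    exact hχsupp.smul_right
  obtain ⟨y, hy⟩ := surjective_of_hasCompactSupport_sub_id hF hsupp fun _ => 1 / 2
  have hyi : ∀ i, y i + χ y * (f (c y) i - c y i + 1 / 2) = 1 / 2 := fun i => congrFun hy i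
  obtain ⟨hχ0, hχle⟩ := hχ y
  have hcube : ∀ i, y i ∈ Icc (0 : ℝ) 1 := by
    intro i
    by_contra hout
    rcases not_and_or.1 hout with h | h
    · have hci : c y i = 0 := projIcc_of_le_left _ (not_le.1 h).le
      have := hneg _ _ hci
      have := hyi i
      rw [hci, Icc.coe_zero] at this
      nlinarith
    · have hci : c y i = 1 := projIcc_of_right_le _ (not_le.1 h).le
      have := hpos _ _ hci
      have := hyi i
      rw [hci, Icc.coe_one] at this
      nlinarith
  refine ⟨c y, funext fun i => ?_⟩
  have hc : (c y i : ℝ) = y i := congrArg Subtype.val (projIcc_of_mem zero_le_one (hcube i))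
  have hχy : χ y = 1 := hχ1 fun i _ => hcube i
  have := hyi i
  rw [hχy, hc] at this
  simpa using (by linarith : f (c y) i = 0)

theorem exists_contDiff_dist_lt_of_isCompact {E F : Type*} [NormedAddCommGroup E]
    [NormedSpace ℝ E] [FiniteDimensional ℝ E] [NormedAddCommGroup F] [NormedSpace ℝ F]
    [CompleteSpace F] {K : Set E} (hK : IsCompact K) {f : E → F} (hf : Continuous f) {ε : ℝ}
    (hε : 0 < ε) : ∃ g : E → F, ContDiff ℝ ∞ g ∧ ∀ x ∈ K, dist (g x) (f x) < ε := by
  have hdense := ContinuousMap.dense_setOfPred_contDiff (⟨f, hf⟩ : C(E, F))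
  rw [mem_closure_iff_nhds_basis (nhds_basis_uniformity
    Metric.uniformity_basis_dist.compactConvergenceUniformity)] at hdense
  obtain ⟨g, hg, hgf⟩ := hdense (K, ε) ⟨hK, hε⟩
  exact ⟨g, hg, hgf⟩

theorem exists_opposite_faces_eq {ι V : Type*} [Fintype ι] [NormedAddCommGroup V]
    [NormedSpace ℝ V] [FiniteDimensional ℝ V] (hV : finrank ℝ V < Fintype.card ι)
    {F : (ι → I) → V} (hF : Continuous F) : ∃ i x y, x i = 0 ∧ y i = 1 ∧ F x = F y := by
  by_contra! hdisj
  have hface : ∀ i (t : I), IsClosed (F '' {x | x i = t}) := fun i t =>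
    ((isClosed_eq (continuous_apply i) continuous_const).isCompact.image hF).isClosed
  have hsep : ∀ i, ∃ e : C(V, ℝ), EqOn e 0 (F '' {x | x i = 0}) ∧
      EqOn e 1 (F '' {x | x i = 1}) ∧ ∀ v, e v ∈ Icc (0 : ℝ) 1 := fun i =>
    exists_continuous_zero_one_of_isClosed (hface i 0) (hface i 1) <| by
      rw [Set.disjoint_left]
      rintro _ ⟨x, hx, rfl⟩ ⟨y, hy, hxy⟩
      exact hdisj i x y hx hy hxy.symm
  choose e he0 he1 _ using hsep
  -- Smoothing `e ∘ F` on the target makes its image negligible, so it misses a point near the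
  -- centre of the cube, contradicting Poincaré–Miranda.
  obtain ⟨g, hg, hge⟩ := exists_contDiff_dist_lt_of_isCompact (isCompact_range hF)
    (f := fun v i => e i v) (by fun_prop) (by norm_num : (0 : ℝ) < 1 / 4)
  have hgi : ∀ x i, |g (F x) i - e i (F x)| < 1 / 4 := fun x i =>
    (dist_le_pi_dist (g (F x)) (fun i => e i (F x)) i).trans_lt (hge _ ⟨x, rfl⟩)
  obtain ⟨v, hv, hvr⟩ := (ContDiff.dense_compl_range_of_finrank_lt_finrank
    (hg.of_le (by exact_mod_cast le_top)) (by simpa using hV)).exists_dist_lt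
    (fun _ => (1 / 2 : ℝ)) (by norm_num : (0 : ℝ) < 1 / 4)
  have hvi : ∀ i, |1 / 2 - v i| < 1 / 4 := fun i => (dist_le_pi_dist _ v i).trans_lt hvr
  obtain ⟨x, hx⟩ := exists_eq_zero_of_nonpos_of_nonneg (f := fun x => g (F x) - v)
    ((hg.continuous.comp hF).sub continuous_const)
    (fun x i hxi => by
      have he : e i (F x) = 0 := he0 i ⟨x, hxi, rfl⟩
      rw [Pi.sub_apply]
      linarith [abs_lt.1 (hvi i), abs_lt.1 (hgi x i)])
    (fun x i hxi => by
      have he : e i (F x) = 1 := he1 i ⟨x, hxi, rfl⟩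
      rw [Pi.sub_apply]
      linarith [abs_lt.1 (hvi i), abs_lt.1 (hgi x i)])
  exact hv ⟨F x, sub_eq_zero.1 hx⟩

end Cube

section Arcs

open scoped unitInterval

variable {X : Type*} [TopologicalSpace X] {A B : Set X} {a b c x y : X}

theorem IsArcSet.isCompact (h : IsArcSet A) : IsCompact A := by
  obtain ⟨h⟩ := h
  exact isCompact_iff_compactSpace.2 h.symm.compactSpace

theorem IsArcSet.exists_isArcFromTo (h : IsArcSet A) : ∃ a b, IsArcFromTo A a b := by
  obtain ⟨h⟩ := h
  exact ⟨_, _, h.symm, rfl, rfl⟩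

theorem IsArcFromTo.isArcSet (h : IsArcFromTo A a b) : IsArcSet A := by
  obtain ⟨h, -, -⟩ := h
  exact ⟨h.symm⟩

theorem IsArcFromTo.isArcEndpoint (h : IsArcFromTo A a b) : IsArcEndpoint A a := ⟨b, h⟩

theorem IsArcFromTo.left_mem (h : IsArcFromTo A a b) : a ∈ A := by
  obtain ⟨h, rfl, -⟩ := h
  exact Subtype.coe_prop _

theorem IsArcEndpoint.mem (h : IsArcEndpoint A a) : a ∈ A := by
  obtain ⟨b, h⟩ := h
  exact h.left_mem

theorem IsArcFromTo.exists_path (h : IsArcFromTo A a b) :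
    ∃ γ : Path a b, Function.Injective γ ∧ range γ = A := by
  obtain ⟨h, h0, h1⟩ := h
  exact ⟨⟨⟨fun t => h t, by fun_prop⟩, h0, h1⟩, Subtype.val_injective.comp h.injective,
    (h.surjective.range_comp Subtype.val).trans Subtype.range_coe⟩

theorem IsArcFromTo.ne (h : IsArcFromTo A a b) : a ≠ b := by
  obtain ⟨γ, hγ, -⟩ := h.exists_path
  simpa using hγ.ne (zero_ne_one (α := I))

theorem IsArcSet.nontrivial (h : IsArcSet A) : A.Nontrivial := by
  obtain ⟨h⟩ := h
  exact nontrivial_coe_sort.1 h.toEquiv.nontrivial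

/-- A homeomorphism between two parametrizations is a monotone or antitone bijection of `[0,1]`,
so it maps `{0, 1}` to itself. -/
theorem IsArcFromTo.eq_or_eq_of_isArcEndpoint (h : IsArcFromTo A a b) (hx : IsArcEndpoint A x) :
    x = a ∨ x = b := by
  obtain ⟨h, rfl, rfl⟩ := h
  obtain ⟨-, k, rfl, -⟩ := hx
  let f : I ≃ₜ I := k.trans h.symm
  have hf : ∀ t, k t = h (f t) := fun t => (h.apply_symm_apply _).symm
  have hf0 : f 0 = 0 ∨ f 0 = 1 := by
    rcases f.continuous.strictMono_of_inj f.injective with hm | hm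
    · obtain ⟨s, hs⟩ := f.surjective 0
      exact .inl (le_antisymm ((hm.monotone unitInterval.nonneg').trans_eq hs)
        unitInterval.nonneg')
    · obtain ⟨s, hs⟩ := f.surjective 1
      exact .inr (le_antisymm unitInterval.le_one' (hs ▸ hm.antitone unitInterval.nonneg'))
  refine hf0.imp (fun h0 => ?_) fun h1 => ?_
  · exact congrArg Subtype.val ((hf 0).trans (congrArg h h0))
  · exact congrArg Subtype.val ((hf 0).trans (congrArg h h1))

theorem injective_subpath {γ : Path a b} (hγ : Function.Injective γ) {s t : I} (hst : s ≠ t) :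
    Function.Injective (γ.subpath s t) := by
  refine hγ.comp fun u v huv => ?_
  have hts : (t : ℝ) - s ≠ 0 := sub_ne_zero.2 fun h => hst (Subtype.ext h.symm)
  have huv' := congrArg Subtype.val huv
  simp only [Icc.coe_convexComb] at huv'
  exact Subtype.ext (mul_right_cancel₀ hts (by linear_combination huv'))

theorem injOn_trans_compl_one {γ : Path a b} {δ : Path b c} (hγ : Function.Injective γ)
    (hδ : Function.Injective δ) (hγδ : range γ ∩ range δ ⊆ {b, c}) :
    InjOn (γ.trans δ) {1}ᶜ := by
  have hne : ∀ s t : I, (s : ℝ) ≤ 1 / 2 → ¬ (t : ℝ) ≤ 1 / 2 → t ≠ 1 →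
      γ.trans δ s ≠ γ.trans δ t := by
    intro s t hs ht ht1 hst
    simp only [Path.trans_apply, hs, ht, dif_pos, dif_neg, not_false_eq_true] at hst
    rcases hγδ ⟨mem_range_self _, _, hst.symm⟩ with hb | hc
    · have ht0 : 2 * (t : ℝ) - 1 = 0 :=
        congrArg Subtype.val (hδ ((hst.symm.trans hb).trans δ.source.symm))
      exact ht (by linarith)
    · have ht1' : 2 * (t : ℝ) - 1 = 1 :=
        congrArg Subtype.val (hδ ((hst.symm.trans hc).trans δ.target.symm))
      exact ht1 (Subtype.ext (show (t : ℝ) = 1 by linarith))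
  intro s hs t ht hst
  by_cases hs2 : (s : ℝ) ≤ 1 / 2 <;> by_cases ht2 : (t : ℝ) ≤ 1 / 2
  · simp only [Path.trans_apply, hs2, ht2, dif_pos] at hst
    simpa [Subtype.ext_iff] using hγ hst
  · exact absurd hst (hne s t hs2 ht2 ht)
  · exact absurd hst.symm (hne t s ht2 hs2 hs)
  · simp only [Path.trans_apply, hs2, ht2, dif_neg, not_false_eq_true] at hst
    simpa [Subtype.ext_iff] using hδ hst

variable [T2Space X]

theorem isArcFromTo_range {γ : Path a b} (hγ : Function.Injective γ) :
    IsArcFromTo (range γ) a b :=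
  ⟨(γ.continuous.isClosedEmbedding hγ).toIsEmbedding.toHomeomorph, γ.source, γ.target⟩

theorem IsArcFromTo.symm (h : IsArcFromTo A a b) : IsArcFromTo A b a := by
  obtain ⟨γ, hγ, rfl⟩ := h.exists_path
  rw [← γ.symm_range]
  exact isArcFromTo_range (hγ.comp unitInterval.symm_bijective.injective)

theorem IsArcFromTo.right_mem (h : IsArcFromTo A a b) : b ∈ A := h.symm.left_mem

theorem isArcFromTo_image_uIcc {γ : Path a b} (hγ : Function.Injective γ) {s t : I}
    (hst : s ≠ t) : IsArcFromTo (γ '' uIcc s t) (γ s) (γ t) :=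
  γ.range_subpath s t ▸ isArcFromTo_range (injective_subpath hγ hst)

theorem IsArcFromTo.exists_subarc (h : IsArcFromTo A a b) (hx : x ∈ A) (hy : y ∈ A)
    (hxy : x ≠ y) : ∃ C ⊆ A, IsArcFromTo C x y := by
  obtain ⟨γ, hγ, rfl⟩ := h.exists_path
  obtain ⟨s, rfl⟩ := hx
  obtain ⟨t, rfl⟩ := hy
  exact ⟨_, image_subset_range _ _, isArcFromTo_image_uIcc hγ fun h => hxy (congrArg γ h)⟩

theorem IsArcFromTo.exists_split (h : IsArcFromTo A a b) (hx : x ∈ A) (hxa : x ≠ a)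
    (hxb : x ≠ b) : ∃ A₁ A₂, IsArcFromTo A₁ a x ∧ IsArcFromTo A₂ x b ∧ A₁ ∪ A₂ = A ∧
      A₁ ∩ A₂ = {x} := by
  obtain ⟨γ, hγ, rfl⟩ := h.exists_path
  obtain ⟨s, rfl⟩ := hx
  have hs0 : 0 ≠ s := by rintro rfl; exact hxa γ.source
  have hs1 : s ≠ 1 := by rintro rfl; exact hxb γ.target
  refine ⟨γ '' uIcc 0 s, γ '' uIcc s 1, ?_, ?_, ?_, ?_⟩
  · simpa using isArcFromTo_image_uIcc hγ hs0
  · simpa using isArcFromTo_image_uIcc hγ hs1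
  · rw [uIcc_of_le unitInterval.nonneg', uIcc_of_le unitInterval.le_one', ← image_union,
      Icc_union_Icc_eq_Icc unitInterval.nonneg' unitInterval.le_one', ← image_univ]
    exact congrArg (γ '' ·)
      (eq_univ_of_forall fun t => ⟨unitInterval.nonneg', unitInterval.le_one'⟩)
  · rw [uIcc_of_le unitInterval.nonneg', uIcc_of_le unitInterval.le_one', ← image_inter hγ,
      Icc_inter_Icc_eq_singleton unitInterval.nonneg' unitInterval.le_one', image_singleton]

theorem IsArcFromTo.union (hA : IsArcFromTo A a b) (hB : IsArcFromTo B b c)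
    (hAB : A ∩ B = {b}) : IsArcFromTo (A ∪ B) a c := by
  obtain ⟨γ, hγ, rfl⟩ := hA.exists_path
  obtain ⟨δ, hδ, rfl⟩ := hB.exists_path
  rw [← Path.trans_range]
  refine isArcFromTo_range ?_
  have hinj := injOn_trans_compl_one hγ hδ (hAB.trans_subset (singleton_subset_iff.2 (.inl rfl)))
  have hone : ∀ t, t ≠ 1 → γ.trans δ t ≠ γ.trans δ 1 := by
    intro t ht h
    rw [Path.target, Path.trans_apply] at h
    split_ifs at h with ht2
    · exact hB.ne (hAB.subset ⟨⟨_, h⟩, hB.right_mem⟩).symm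
    · have ht1 : 2 * (t : ℝ) - 1 = 1 := congrArg Subtype.val (hδ (h.trans δ.target.symm))
      exact ht (Subtype.ext (show (t : ℝ) = 1 by linarith))
  intro s t hst
  by_cases hs : s = 1 <;> by_cases ht : t = 1
  · exact hs.trans ht.symm
  · exact absurd (hs ▸ hst.symm) (hone t ht)
  · exact absurd (ht ▸ hst) (hone s hs)
  · exact hinj hs ht hst

theorem isSimpleClosedCurve_range_of_injOn {γ : Path a a} (hγ : InjOn γ {1}ᶜ) :
    IsSimpleClosedCurve (range γ) := by
  let F : UnitAddCircle → X := AddCircle.liftIco 1 0 γ.extend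
  have hFc : Continuous F :=
    AddCircle.liftIco_zero_continuous (by simp) γ.continuous_extend.continuousOn
  have hFi : Function.Injective F := by
    refine Function.Injective.comp (injOn_iff_injective.1 ?_) (AddCircle.equivIco 1 0).injective
    rw [zero_add]
    intro s hs t ht hst
    have hs' := Ico_subset_Icc_self hs
    have ht' := Ico_subset_Icc_self ht
    rw [γ.extend_apply hs', γ.extend_apply ht'] at hst
    exact congrArg Subtype.val (hγ (fun h => hs.2.ne (congrArg Subtype.val h))
      (fun h => ht.2.ne (congrArg Subtype.val h)) hst)
  have hFr : range F = range γ := by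
    refine ((AddCircle.equivIco 1 0).surjective.range_comp _).trans ?_
    rw [range_domRestrict, zero_add, ← γ.image_extend_of_subset Subset.rfl, unitInterval,
      ← Ico_union_right zero_le_one, image_union, image_singleton, eq_comm, union_eq_left]
    exact singleton_subset_iff.2 ⟨0, by simp⟩
  rw [← hFr]
  exact ⟨(hFc.isClosedEmbedding hFi).toIsEmbedding.toHomeomorph.symm.trans
    (AddCircle.homeomorphCircle one_ne_zero)⟩

theorem IsArcFromTo.isSimpleClosedCurve (hA : IsArcFromTo A a b) (hB : IsArcFromTo B b a)
    (hAB : A ∩ B ⊆ {a, b}) : IsSimpleClosedCurve (A ∪ B) := by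
  obtain ⟨γ, hγ, rfl⟩ := hA.exists_path
  obtain ⟨δ, hδ, rfl⟩ := hB.exists_path
  rw [← Path.trans_range]
  exact isSimpleClosedCurve_range_of_injOn
    (injOn_trans_compl_one hγ hδ (hAB.trans (pair_comm a b).subset))

theorem IsArcFromTo.exists_continuousOn_leftInverse (h : IsArcFromTo A a b) :
    ∃ (γ : Path a b) (κ : X → I), ContinuousOn κ A ∧ range γ = A ∧ Function.LeftInverse κ γ := by
  obtain ⟨γ, hγ, rfl⟩ := h.exists_path
  have hκ := Function.leftInverse_invFun hγ
  refine ⟨γ, Function.invFun γ, ?_, rfl, hκ⟩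
  rw [(γ.continuous.isClosedEmbedding hγ).isEmbedding.continuousOn_iff]
  refine continuousOn_id.congr ?_
  rintro _ ⟨t, rfl⟩
  exact congrArg γ (hκ t)

end Arcs

section Height

theorem IsArcEndpoint.exists_continuousMap {X : Type*} [TopologicalSpace X] [T2Space X]
    [NormalSpace X] {A M : Set X} {p : X} (hA : IsArcEndpoint A p) (hM : IsClosed M)
    (hAM : A ∩ M ⊆ {p}) :
    ∃ f : C(X, ℝ), f p = 0 ∧ InjOn f A ∧ (∀ x ∈ A, 0 ≤ f x) ∧ EqOn f 0 M := by
  classical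
  obtain ⟨b, hA⟩ := hA
  obtain ⟨γ, κ, hκ, rfl, hκγ⟩ := hA.exists_continuousOn_leftInverse
  have hκp : κ p = 0 := by simpa using hκγ 0
  have hAc : IsClosed (range γ) := (isCompact_range γ.continuous).isClosed
  let ρ : X → ℝ := (range γ).piecewise (fun x => κ x) 0
  have hρA : EqOn ρ (fun x => κ x) (range γ) := piecewise_eqOn _ _ _
  have hρM : EqOn ρ 0 M := by
    intro x hx
    by_cases hxA : x ∈ range γ
    · obtain rfl := hAM ⟨hxA, hx⟩
      simp [hρA hxA, hκp]
    · exact piecewise_eq_of_notMem _ _ _ hxA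
  have hρ : ContinuousOn ρ (range γ ∪ M) :=
    ((continuous_subtype_val.comp_continuousOn hκ).congr hρA).union_of_isClosed
      (continuousOn_const.congr hρM) hAc hM
  obtain ⟨f, hf⟩ := ContinuousMap.exists_restrict_eq (hAc.union hM)
    ⟨_, continuousOn_iff_continuous_domRestrict.1 hρ⟩
  have hfρ : EqOn f ρ (range γ ∪ M) := fun x hx => DFunLike.congr_fun hf ⟨x, hx⟩
  have hfκ : EqOn f (fun x => κ x) (range γ) := (hfρ.mono subset_union_left).trans hρA
  refine ⟨f, by simp [hfκ hA.left_mem, hκp], ?_, fun x hx => ?_,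
    (hfρ.mono subset_union_right).trans hρM⟩
  · refine InjOn.congr ?_ hfκ.symm
    rintro _ ⟨s, rfl⟩ _ ⟨t, rfl⟩ hst
    have hκst : κ (γ s) = κ (γ t) := Subtype.ext hst
    rw [hκγ s, hκγ t] at hκst
    exact congrArg γ hκst
  · rw [hfκ hx]
    exact (κ x).2.1

/-- The witness `f i` is injective on the `i`-th leg and vanishes on the other legs. -/
theorem IsSimpleNod.exists_coordinates {X : Type*} [TopologicalSpace X] [T2Space X]
    [NormalSpace X] {n : ℕ} {N : Set X} {p : X} (hN : IsSimpleNod n N p) :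
    ∃ f : Fin n → C(X, ℝ), (∀ i, f i p = 0) ∧
      ∀ x ∈ N, ∃ i, 0 ≤ f i x ∧ ∀ y ∈ N, f i y = f i x → y = x ∨ x = p := by
  obtain ⟨-, L, hL, rfl, hLp, hLL⟩ := hN
  have hf : ∀ i, ∃ f : C(X, ℝ), f p = 0 ∧ InjOn f (L i) ∧ (∀ x ∈ L i, 0 ≤ f x) ∧
      EqOn f 0 (⋃ j ∈ {j | j ≠ i}, L j) := by
    refine fun i => (hLp i).exists_continuousMap
      ((toFinite _).isClosed_biUnion fun j _ => (hL j).isCompact.isClosed) ?_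
    rintro x ⟨hxi, hx⟩
    obtain ⟨j, hj, hxj⟩ := mem_iUnion₂.1 hx
    exact (hLL j i hj).subset ⟨hxj, hxi⟩
  choose f hfp hfi hf0 hfM using hf
  refine ⟨f, hfp, fun x hx => ?_⟩
  obtain ⟨i, hxi⟩ := mem_iUnion.1 hx
  refine ⟨i, hf0 i x hxi, fun y hy hyx => ?_⟩
  obtain ⟨j, hyj⟩ := mem_iUnion.1 hy
  by_cases hji : j = i
  · exact .inl (hfi i (hji ▸ hyj) hxi hyx)
  · have hy0 : f i y = 0 := hfM i (mem_iUnion₂.2 ⟨j, hji, hyj⟩)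
    exact .inr (hfi i hxi (hLp i).mem (by rw [← hyx, hy0, hfp]))

variable {X : Type u} [MetricSpace X] {p : X}

theorem CP.mem_set (A : CP X p) : p ∈ A.set := A.2.2

theorem CP.isCompact_set (A : CP X p) : IsCompact A.set := A.1.isCompact

theorem CP.isConnected_set (A : CP X p) : IsConnected A.set := A.2.1

theorem CP.set_injective : Function.Injective (CP.set : CP X p → Set X) := fun _ _ h =>
  Subtype.ext (NonemptyCompacts.ext h)

theorem CP.isOpen_set_subset {U : Set X} (hU : IsOpen U) : IsOpen {A : CP X p | A.set ⊆ U} :=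
  (NonemptyCompacts.isOpen_subsets_of_isOpen hU).preimage continuous_subtype_val

theorem CP.isOpen_set_inter_nonempty {U : Set X} (hU : IsOpen U) :
    IsOpen {A : CP X p | (A.set ∩ U).Nonempty} :=
  (NonemptyCompacts.isOpen_inter_nonempty_of_isOpen hU).preimage continuous_subtype_val

/-- The point `{p}` of `C(p, X)`. -/
def CP.singleton (p : X) : CP X p := ⟨{p}, by simpa using isConnected_singleton, by simp⟩

theorem CP.set_singleton : (CP.singleton p).set = {p} := NonemptyCompacts.coe_singleton p

/-- The maximum of `f` over a member of `C(p, X)`. -/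
noncomputable def CP.height (f : C(X, ℝ)) (A : CP X p) : ℝ := sSup (f '' A.set)

theorem CP.continuous_height (f : C(X, ℝ)) : Continuous (CP.height f : CP X p → ℝ) := by
  refine OrderTopology.continuous_iff.2 fun t => ⟨?_, ?_⟩
  · have hIoi : CP.height f ⁻¹' Ioi t = {A : CP X p | (A.set ∩ f ⁻¹' Ioi t).Nonempty} := by
      ext A
      rw [mem_preimage, mem_Ioi, CP.height,
        lt_csSup_iff (A.isCompact_set.image f.continuous).bddAbove
          (A.isConnected_set.nonempty.image f), exists_mem_image]
      rfl
    exact hIoi ▸ CP.isOpen_set_inter_nonempty (isOpen_Ioi.preimage f.continuous)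
  · have hIio : CP.height f ⁻¹' Iio t = {A : CP X p | A.set ⊆ f ⁻¹' Iio t} := by
      ext A
      rw [mem_preimage, mem_Iio, CP.height, A.isCompact_set.sSup_lt_iff_of_continuous
        A.isConnected_set.nonempty f.continuous.continuousOn]
      rfl
    exact hIio ▸ CP.isOpen_set_subset (isOpen_Iio.preimage f.continuous)

theorem CP.le_height (f : C(X, ℝ)) {A : CP X p} {x : X} (hx : x ∈ A.set) : f x ≤ A.height f :=
  le_csSup (A.isCompact_set.image f.continuous).bddAbove (mem_image_of_mem f hx)

theorem CP.exists_apply_eq_of_le_height (f : C(X, ℝ)) {A : CP X p} {t : ℝ} (hpt : f p ≤ t)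
    (ht : t ≤ A.height f) : ∃ x ∈ A.set, f x = t := by
  have hmax : A.height f ∈ f '' A.set :=
    (A.isCompact_set.image f.continuous).sSup_mem (A.isConnected_set.nonempty.image f)
  exact (A.isConnected_set.image f f.continuous.continuousOn).isPreconnected.ordConnected.out
    (mem_image_of_mem f A.mem_set) hmax ⟨hpt, ht⟩

theorem HasOrdIn.exists_continuous_injOn {n : ℕ} (h : HasOrdIn univ p n) :
    ∃ W : Set (CP X p), IsOpen W ∧ W.Nonempty ∧
      ∃ φ : CP X p → Fin n → ℝ, Continuous φ ∧ InjOn φ W := by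
  obtain ⟨N, -, -, ⟨U, hU, hpU, hUN⟩, hN⟩ := h
  rw [inter_univ] at hUN
  obtain ⟨f, hfp, hf⟩ := hN.exists_coordinates
  have hsub : ∀ A B : CP X p, A.set ⊆ U → B.set ⊆ U →
      (∀ i, A.height (f i) = B.height (f i)) → A.set ⊆ B.set := by
    intro A B hA hB hAB x hx
    obtain ⟨i, h0, hi⟩ := hf x (hUN (hA hx))
    obtain ⟨y, hy, hyx⟩ := CP.exists_apply_eq_of_le_height (f i) (A := B)
      ((hfp i).trans_le h0) (hAB i ▸ CP.le_height (f i) hx)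
    rcases hi y (hUN (hB hy)) hyx with rfl | rfl
    · exact hy
    · exact B.mem_set
  refine ⟨{A | A.set ⊆ U}, CP.isOpen_set_subset hU, ⟨CP.singleton p, ?_⟩,
    fun A i => A.height (f i), continuous_pi fun i => CP.continuous_height (f i), ?_⟩
  · simpa [CP.set_singleton] using hpU
  · intro A hA B hB hAB
    exact CP.set_injective ((hsub A B hA hB (congrFun hAB)).antisymm
      (hsub B A hB hA fun i => (congrFun hAB i).symm))

end Height

section Branching

open scoped unitInterval

theorem exists_ne_image_uIcc_subset {M : Type*} [TopologicalSpace M] [T1Space M] {a b : M}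
    (γ : Path a b) (hab : a ≠ b) {V : Set M} (hV : V ∈ 𝓝 a) :
    ∃ s t, γ s ≠ γ t ∧ γ '' uIcc s t ⊆ V := by
  by_contra! h
  have hopen : IsOpen (γ ⁻¹' {a}) := by
    refine isOpen_iff_mem_nhds.2 fun s hs => ?_
    have hVs : γ ⁻¹' V ∈ 𝓝 s := γ.continuous.continuousAt.preimage_mem_nhds (by rwa [hs])
    have huIcc : Filter.Tendsto (fun t => uIcc s t) (𝓝 s) (𝓝 s).smallSets :=
      tendsto_const_nhds.uIcc Filter.tendsto_id
    filter_upwards [Filter.tendsto_smallSets_iff.1 huIcc _ hVs] with t ht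
    by_contra hta
    exact h s t (fun hst => hta (hst.symm.trans hs)) (image_subset_iff.2 ht)
  have huniv := IsClopen.eq_univ ⟨isClosed_singleton.preimage γ.continuous, hopen⟩
    ⟨0, γ.source⟩
  have h1 : γ 1 = a := huniv.symm.subset (mem_univ 1)
  exact hab (h1.symm.trans γ.target)

open Classical in
/-- The map collapsing everything outside the branch `b` to `q`. -/
noncomputable def branchRetraction {Y : Type*} (b : Set Y) (q : Y) : Y → Y :=
  b.piecewise id fun _ => q

open Classical in
theorem branchRetraction_of_mem {Y : Type*} {b : Set Y} {q x : Y} (hx : x ∈ b) :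
    branchRetraction b q x = x := piecewise_eq_of_mem _ _ _ hx

open Classical in
theorem branchRetraction_of_notMem {Y : Type*} {b : Set Y} {q x : Y} (hx : x ∉ b) :
    branchRetraction b q x = q := piecewise_eq_of_notMem _ _ _ hx

variable {Y : Type u} [MetricSpace Y] {q : Y} {ι : Type*} {B : ι → Set Y}

/-- The map of `C(q, Y)` induced by a self-map of `Y` that fixes `q`. -/
noncomputable def CP.map (f : Y → Y) (hf : Continuous f) (hq : f q = q) (A : CP Y q) : CP Y q :=
  ⟨A.1.map f hf, by simpa using A.2.1.image f hf.continuousOn, by simpa using ⟨q, A.2.2, hq⟩⟩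

theorem CP.set_map {f : Y → Y} (hf : Continuous f) (hq : f q = q) (A : CP Y q) :
    (A.map f hf hq).set = f '' A.set :=
  NonemptyCompacts.coe_map _ _

theorem CP.continuous_map {f : Y → Y} (hf : Continuous f) (hq : f q = q) :
    Continuous (CP.map f hf hq) :=
  (hf.nonemptyCompacts_map.comp continuous_subtype_val).subtype_mk _

theorem CP.coe_sup'_univ [Fintype ι] [Nonempty ι] (A : ι → CP Y q) :
    ((Finset.univ.sup' Finset.univ_nonempty fun i => (A i).1 : NonemptyCompacts Y) : Set Y) =
      ⋃ i, (A i).set := by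
  rw [Finset.apply_sup'_eq_sup'_comp Finset.univ_nonempty
    ((↑) : NonemptyCompacts Y → Set Y) (fun _ _ => NonemptyCompacts.coe_sup _ _),
    Finset.sup'_univ_eq_ciSup]
  rfl

/-- The union of a finite family of members of `C(q, Y)`, which is connected because they all
contain `q`. -/
noncomputable def CP.iUnion [Fintype ι] [Nonempty ι] (A : ι → CP Y q) : CP Y q :=
  ⟨Finset.univ.sup' Finset.univ_nonempty fun i => (A i).1, by
    have hq : q ∈ ⋂ i, (A i).set := mem_iInter.2 fun i => (A i).mem_set
    rw [CP.coe_sup'_univ]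
    exact ⟨⟨⟨q, iInter_subset_iUnion hq⟩, isPreconnected_iUnion ⟨q, hq⟩ fun i =>
      (A i).isConnected_set.isPreconnected⟩, iInter_subset_iUnion hq⟩⟩

theorem CP.set_iUnion [Fintype ι] [Nonempty ι] (A : ι → CP Y q) :
    (CP.iUnion A).set = ⋃ i, (A i).set :=
  CP.coe_sup'_univ A

theorem CP.continuous_iUnion [Fintype ι] [Nonempty ι] :
    Continuous (CP.iUnion : (ι → CP Y q) → CP Y q) :=
  Continuous.subtype_mk (Continuous.finset_sup'_apply _ fun i _ =>
    continuous_subtype_val.comp (continuous_apply i)) _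

/-- The point `q` splits `Y` into the nondegenerate closed branches `B i`, which meet only
at `q`. -/
structure IsBranching (B : ι → Set Y) (q : Y) : Prop where
  isClosed : ∀ i, IsClosed (B i)
  mem : ∀ i, q ∈ B i
  nontrivial : ∀ i, (B i).Nontrivial
  inter_eq : ∀ i j, i ≠ j → B i ∩ B j = {q}
  iUnion_eq : ⋃ i, B i = univ

namespace IsBranching

theorem exists_mem (h : IsBranching B q) (x : Y) : ∃ i, x ∈ B i :=
  mem_iUnion.1 (h.iUnion_eq ▸ mem_univ x)

theorem continuous_branchRetraction [Finite ι] (h : IsBranching B q) (i : ι) :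
    Continuous (branchRetraction (B i) q) := by
  let M : Set Y := ⋃ j ∈ {j | j ≠ i}, B j
  have hM : IsClosed M := (toFinite _).isClosed_biUnion fun j _ => h.isClosed j
  have hBM : B i ∪ M = univ := by
    refine eq_univ_of_forall fun x => ?_
    obtain ⟨j, hj⟩ := h.exists_mem x
    by_cases hji : j = i
    · exact .inl (hji ▸ hj)
    · exact .inr (mem_iUnion₂.2 ⟨j, hji, hj⟩)
  have hMq : EqOn (branchRetraction (B i) q) (fun _ => q) M := by
    intro x hx
    obtain ⟨j, hj, hxj⟩ := mem_iUnion₂.1 hx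
    by_cases hxi : x ∈ B i
    · exact (branchRetraction_of_mem hxi).trans ((h.inter_eq j i hj).subset ⟨hxj, hxi⟩)
    · exact branchRetraction_of_notMem hxi
  rw [← continuousOn_univ, ← hBM]
  exact (continuousOn_id.congr fun x => branchRetraction_of_mem).union_of_isClosed
    (continuousOn_const.congr hMq) (h.isClosed i) hM

/-- The part of a member of `C(q, Y)` lying in the branch `B i`. -/
noncomputable def restrict [Finite ι] (h : IsBranching B q) (i : ι) : CP Y q → CP Y q :=
  CP.map _ (h.continuous_branchRetraction i) (branchRetraction_of_mem (h.mem i))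

theorem continuous_restrict [Finite ι] (h : IsBranching B q) (i : ι) :
    Continuous (h.restrict i) :=
  CP.continuous_map _ _

theorem set_restrict [Finite ι] (h : IsBranching B q) (i : ι) (A : CP Y q) :
    (h.restrict i A).set = A.set ∩ B i := by
  refine (CP.set_map _ _ A).trans (Subset.antisymm ?_ ?_)
  · rintro _ ⟨x, hx, rfl⟩
    by_cases hxi : x ∈ B i
    · rw [branchRetraction_of_mem hxi]
      exact ⟨hx, hxi⟩
    · rw [branchRetraction_of_notMem hxi]
      exact ⟨A.mem_set, h.mem i⟩
  · rintro x ⟨hx, hxi⟩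
    exact ⟨x, hx, branchRetraction_of_mem hxi⟩

theorem restrict_iUnion [Fintype ι] [Nonempty ι] (h : IsBranching B q) {C : ι → CP Y q}
    (hC : ∀ i, (C i).set ⊆ B i) (j : ι) : h.restrict j (CP.iUnion C) = C j := by
  refine CP.set_injective ?_
  rw [set_restrict, CP.set_iUnion]
  refine Subset.antisymm ?_ fun x hx => ⟨mem_iUnion_of_mem j hx, hC j hx⟩
  rintro x ⟨hx, hxj⟩
  obtain ⟨i, hxi⟩ := mem_iUnion.1 hx
  by_cases hij : i = j
  · exact hij ▸ hxi
  · obtain rfl := (h.inter_eq i j hij).subset ⟨hC i hxi, hxj⟩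
    exact (C j).mem_set

theorem iUnion_restrict [Fintype ι] [Nonempty ι] (h : IsBranching B q) (A : CP Y q) :
    CP.iUnion (fun i => h.restrict i A) = A := by
  refine CP.set_injective ?_
  simp only [CP.set_iUnion, set_restrict, ← inter_iUnion, h.iUnion_eq, inter_univ]

theorem exists_restrict_ne [CompactSpace Y] [ConnectedSpace Y] [Finite ι]
    (h : IsBranching B q) (i : ι) (A : CP Y q) : ∃ C, A ≠ h.restrict i C := by
  by_contra! hA
  let top : CP Y q := ⟨⊤, by simpa using isConnected_univ, by simp⟩
  have hB := congrArg CP.set ((hA top).symm.trans (hA (CP.singleton q)))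
  rw [set_restrict, set_restrict, CP.set_singleton, show top.set = univ from rfl, univ_inter,
    singleton_inter_of_mem (h.mem i)] at hB
  exact (h.nontrivial i).ne_singleton hB

theorem exists_path_subset_branch [CompactSpace Y] [ConnectedSpace Y]
    [PathConnectedSpace (CP Y q)] [Finite ι] (h : IsBranching B q) (i : ι) (A : CP Y q)
    {V : Set (CP Y q)} (hV : V ∈ 𝓝 (h.restrict i A)) :
    ∃ γ : C(I, CP Y q), γ 0 ≠ γ 1 ∧ ∀ s, γ s ∈ V ∧ (γ s).set ⊆ B i := by
  obtain ⟨C, hC⟩ := h.exists_restrict_ne i (h.restrict i A)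
  let δ := (PathConnectedSpace.somePath A C).map (h.continuous_restrict i)
  obtain ⟨s, t, hst, hδV⟩ := exists_ne_image_uIcc_subset δ hC hV
  refine ⟨(δ.subpath s t).toContinuousMap, by simpa using hst, fun u => ?_⟩
  have hu : δ.subpath s t u ∈ δ '' uIcc s t := δ.range_subpath s t ▸ mem_range_self u
  refine ⟨hδV hu, ?_⟩
  obtain ⟨v, -, hv⟩ := hu
  change (δ.subpath s t u).set ⊆ B i
  rw [← hv]
  exact (h.set_restrict i _).trans_subset inter_subset_right

/-- The cube moves the parts of a member of `W` in the different branches independently. -/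
theorem exists_cube [CompactSpace Y] [ConnectedSpace Y] [PathConnectedSpace (CP Y q)]
    [Finite ι] (h : IsBranching B q) {W : Set (CP Y q)} (hW : IsOpen W) (hne : W.Nonempty) :
    ∃ g : (ι → I) → CP Y q, Continuous g ∧ (∀ x, g x ∈ W) ∧
      ∀ i x y, x i = 0 → y i = 1 → g x ≠ g y := by
  have := Fintype.ofFinite ι
  have : Nonempty ι := ⟨(h.exists_mem q).choose⟩
  obtain ⟨A, hA⟩ := hne
  obtain ⟨V, hV, hVW⟩ := isOpen_pi_iff'.1 (hW.preimage CP.continuous_iUnion)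
    (fun i => h.restrict i A) (by rwa [mem_preimage, h.iUnion_restrict])
  choose γ hne hγ using fun i => h.exists_path_subset_branch i A ((hV i).1.mem_nhds (hV i).2)
  refine ⟨fun x => CP.iUnion fun i => γ i (x i), CP.continuous_iUnion.comp (by fun_prop),
    fun x => hVW fun i _ => (hγ i _).1, fun i x y hx hy hxy => hne i ?_⟩
  have hi := congrArg (h.restrict i) hxy
  rwa [h.restrict_iUnion fun j => (hγ j _).2, h.restrict_iUnion fun j => (hγ j _).2, hx, hy] at hi

end IsBranching

end Branching

section Deformation

open scoped unitInterval

theorem IsArcFromTo.exists_deformation {Y : Type*} [TopologicalSpace Y] [T2Space Y] {v w : Y}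
    {T J : Set Y} (hJ : IsArcFromTo J v w) (hT : IsClosed T) (hJT : J ∩ T = {v}) :
    ∃ f : I × Y → Y, ContinuousOn f (univ ×ˢ (T ∪ J)) ∧ (∀ x ∈ T ∪ J, f (0, x) = x) ∧
      (∀ t, ∀ x ∈ T, f (t, x) = x) ∧ ∀ x ∈ T ∪ J, f (1, x) ∈ T := by
  classical
  have hJc : IsClosed J := hJ.isArcSet.isCompact.isClosed
  obtain ⟨γ, κ, hκ, rfl, hκγ⟩ := hJ.exists_continuousOn_leftInverse
  let f : I × Y → Y := fun z => if z.2 ∈ range γ then γ (σ z.1 * κ z.2) else z.2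
  have hfγ : ∀ t s, f (t, γ s) = γ (σ t * s) := fun t s =>
    (if_pos (mem_range_self s)).trans (by rw [hκγ s])
  have hfT : ∀ t, ∀ x ∈ T, f (t, x) = x := by
    intro t x hx
    by_cases hxJ : x ∈ range γ
    · obtain rfl : x = v := hJT.subset ⟨hxJ, hx⟩
      rw [← γ.source, hfγ, mul_zero]
    · exact if_neg hxJ
  refine ⟨f, ?_, ?_, hfT, ?_⟩
  · rw [prod_union]
    refine ContinuousOn.union_of_isClosed ?_ ?_ (isClosed_univ.prod hT) (isClosed_univ.prod hJc)
    · exact continuousOn_snd.congr fun z hz => hfT z.1 z.2 hz.2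
    · have hσ : ContinuousOn (fun z : I × Y => σ z.1 * κ z.2) (univ ×ˢ range γ) :=
        (by fun_prop : Continuous fun z : I × Y => σ z.1).continuousOn.mul
          (hκ.comp continuousOn_snd fun z hz => hz.2)
      exact (γ.continuous.comp_continuousOn hσ).congr fun z hz => if_pos hz.2
  · rintro x (hx | ⟨s, rfl⟩)
    · exact hfT 0 x hx
    · rw [hfγ, unitInterval.symm_zero, one_mul]
  · rintro x (hx | ⟨s, rfl⟩)
    · rwa [hfT 1 x hx]
    · rw [hfγ, unitInterval.symm_one, zero_mul, γ.source]
      exact (hJT.superset rfl).2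

variable {Y : Type u} [MetricSpace Y] {q : Y}

theorem CP.exists_joined_of_homotopy (A : CP Y q) {f : I × Y → Y}
    (hf : ContinuousOn f (univ ×ˢ A.set)) (hf0 : ∀ x ∈ A.set, f (0, x) = x)
    (hfq : ∀ t, f (t, q) = q) : ∃ A' : CP Y q, A'.set = (fun x => f (1, x)) '' A.set ∧
      Joined A A' := by
  have := isCompact_iff_compactSpace.1 A.isCompact_set
  have := isConnected_iff_connectedSpace.1 A.isConnected_set
  let g : I → A.set → Y := fun t x => f (t, x)
  have hg : Continuous (Function.uncurry g) :=
    hf.comp_continuous (by fun_prop) fun z => ⟨mem_univ _, z.2.2⟩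
  have hgt : ∀ t, Continuous (g t) := fun t => hg.comp (Continuous.prodMk_right t)
  let P : I → CP Y q := fun t => ⟨(⊤ : NonemptyCompacts A.set).map (g t) (hgt t), by
    simpa using isConnected_range (hgt t), by simpa using ⟨q, A.mem_set, hfq t⟩⟩
  have hP : ∀ t, (P t).set = (fun x => f (t, x)) '' A.set := by
    refine fun t => (NonemptyCompacts.coe_map _ _).trans ?_
    rw [NonemptyCompacts.coe_top, image_univ, image_eq_range]
  have hPc : Continuous P :=
    (Continuous.nonemptyCompacts_map' (f := fun _ : I => (⊤ : NonemptyCompacts A.set))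
      (g := g) continuous_const hg).subtype_mk _
  refine ⟨P 1, hP 1, ⟨⟨⟨P, hPc⟩, CP.set_injective ?_, rfl⟩⟩⟩
  exact (hP 0).trans ((image_congr hf0).trans (image_id' _))

theorem CP.exists_joined_of_subset_union_arc {v w : Y} {T J : Set Y} (hT : IsClosed T)
    (hq : q ∈ T) (hJ : IsArcFromTo J v w) (hJT : J ∩ T = {v}) (A : CP Y q)
    (hA : A.set ⊆ T ∪ J) : ∃ A' : CP Y q, A'.set ⊆ T ∧ Joined A A' := by
  obtain ⟨f, hf, hf0, hfT, hf1⟩ := hJ.exists_deformation hT hJT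
  obtain ⟨A', hA', h⟩ := A.exists_joined_of_homotopy (hf.mono (prod_mono_right hA))
    (fun x hx => hf0 x (hA hx)) fun t => hfT t q hq
  refine ⟨A', ?_, h⟩
  rw [hA']
  exact image_subset_iff.2 fun x hx => hf1 x (hA hx)

/-- Any two distinct points of `T` are the end points of an arc in `T`. -/
def IsArcwiseConnected {Y : Type*} [TopologicalSpace Y] (T : Set Y) : Prop :=
  ∀ a ∈ T, ∀ b ∈ T, a ≠ b → ∃ C ⊆ T, IsArcFromTo C a b

theorem IsArcwiseConnected.union_arc {Y : Type*} [TopologicalSpace Y] [T2Space Y] {v w : Y}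
    {T J : Set Y} (hT : IsArcwiseConnected T) (hJ : IsArcFromTo J v w) (hJT : J ∩ T = {v}) :
    IsArcwiseConnected (T ∪ J) := by
  have hv : v ∈ T := (hJT.superset rfl).2
  have hTJ : ∀ a ∈ T, ∀ b ∈ J, a ≠ b → ∃ C ⊆ T ∪ J, IsArcFromTo C a b := by
    intro a ha b hb hab
    rcases eq_or_ne a v with rfl | hav
    · obtain ⟨C, hC, hCab⟩ := hJ.exists_subarc hJ.left_mem hb hab
      exact ⟨C, hC.trans subset_union_right, hCab⟩
    obtain ⟨C, hC, hCav⟩ := hT a ha v hv hav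
    rcases eq_or_ne v b with rfl | hvb
    · exact ⟨C, hC.trans subset_union_left, hCav⟩
    obtain ⟨D, hD, hDvb⟩ := hJ.exists_subarc hJ.left_mem hb hvb
    refine ⟨C ∪ D, union_subset_union hC hD, hCav.union hDvb (Subset.antisymm ?_ ?_)⟩
    · exact fun x hx => hJT.subset ⟨hD hx.2, hC hx.1⟩
    · exact singleton_subset_iff.2 ⟨hCav.right_mem, hDvb.left_mem⟩
  rintro a (ha | ha) b (hb | hb) hab
  · obtain ⟨C, hC, hCab⟩ := hT a ha b hb hab
    exact ⟨C, hC.trans subset_union_left, hCab⟩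
  · exact hTJ a ha b hb hab
  · obtain ⟨C, hC, hCba⟩ := hTJ b hb a ha hab.symm
    exact ⟨C, hC, hCba.symm⟩
  · obtain ⟨C, hC, hCab⟩ := hJ.exists_subarc ha hb hab
    exact ⟨C, hC.trans subset_union_right, hCab⟩

theorem iUnion_update_union {α ι : Type*} [DecidableEq ι] (B : ι → Set α) (i : ι) (J : Set α) :
    ⋃ j, Function.update B i (B i ∪ J) j = (⋃ j, B j) ∪ J := by
  have hle : B ≤ Function.update B i (B i ∪ J) := le_update_self_iff.2 subset_union_left
  have hge : Function.update B i (B i ∪ J) ≤ fun _ => (⋃ j, B j) ∪ J :=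
    update_le_iff.2 ⟨union_subset_union_left J (subset_iUnion B i),
      fun j _ => (subset_iUnion B j).trans subset_union_left⟩
  refine (iUnion_subset hge).antisymm (union_subset (iUnion_mono hle) ?_)
  refine subset_iUnion_of_subset i ?_
  rw [Function.update_self]
  exact subset_union_right

/-- The family `B` is obtained from the one-point sets `{q}` by successively attaching arcs to
its members, each arc meeting the union of the family constructed so far in one end point. -/
inductive IsArborescence {Y ι : Type*} [TopologicalSpace Y] [DecidableEq ι] (q : Y) :
    (ι → Set Y) → Prop
  | base : IsArborescence q fun _ => {q}
  | attach {B : ι → Set Y} {i : ι} {J : Set Y} {v w : Y} (hB : IsArborescence q B)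
      (hJ : IsArcFromTo J v w) (hJB : J ∩ ⋃ j, B j = {v}) (hv : v ∈ B i) :
      IsArborescence q (Function.update B i (B i ∪ J))

namespace IsArborescence

variable {Y ι : Type*} [TopologicalSpace Y] [DecidableEq ι] {q : Y} {B : ι → Set Y}

theorem mem (h : IsArborescence q B) (i : ι) : q ∈ B i := by
  induction h with
  | base => rfl
  | attach _ _ _ _ ih =>
    simp only [Function.update_apply]
    split_ifs with hij
    · exact .inl (hij ▸ ih)
    · exact ih

theorem isClosed [T2Space Y] (h : IsArborescence q B) (i : ι) : IsClosed (B i) := by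
  induction h with
  | base => exact isClosed_singleton
  | attach _ hJ _ _ ih =>
    simp only [Function.update_apply]
    split_ifs with hij
    · exact (hij ▸ ih).union hJ.isArcSet.isCompact.isClosed
    · exact ih

theorem inter_eq (h : IsArborescence q B) {i j : ι} (hij : i ≠ j) : B i ∩ B j = {q} := by
  refine Subset.antisymm ?_ (singleton_subset_iff.2 ⟨h.mem i, h.mem j⟩)
  induction h generalizing i j with
  | base => exact (inter_self _).subset
  | @attach B k J v w _ hJ hJB hv ih =>
    have hBJ : ∀ l, l ≠ k → (B k ∪ J) ∩ B l ⊆ {q} := by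
      rintro l hl x ⟨hxk | hxJ, hxl⟩
      · exact ih hl ⟨hxl, hxk⟩
      · obtain rfl : x = v := hJB.subset ⟨hxJ, mem_iUnion_of_mem l hxl⟩
        exact ih hl ⟨hxl, hv⟩
    simp only [Function.update_apply]
    split_ifs with hik hjk hjk
    · exact absurd (hik.trans hjk.symm) hij
    · exact hBJ j hjk
    · exact (inter_comm _ _).trans_subset (hBJ i hik)
    · exact ih hij

theorem isArcwiseConnected_iUnion [T2Space Y] (h : IsArborescence q B) :
    IsArcwiseConnected (⋃ i, B i) := by
  induction h with
  | base =>
    intro a ha b hb hab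
    obtain ⟨-, rfl⟩ := mem_iUnion.1 ha
    obtain ⟨-, rfl⟩ := mem_iUnion.1 hb
    exact absurd rfl hab
  | attach _ hJ hJB _ ih =>
    rw [iUnion_update_union]
    exact ih.union_arc hJ hJB

theorem joined_singleton {Y ι : Type*} [MetricSpace Y] [DecidableEq ι] [Finite ι] {q : Y}
    {B : ι → Set Y} (h : IsArborescence q B) (A : CP Y q) (hA : A.set ⊆ ⋃ i, B i) :
    Joined A (CP.singleton q) := by
  induction h generalizing A with
  | base =>
    have hAq : A.set = {q} := (hA.trans (iUnion_subset fun _ => Subset.rfl)).antisymm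
      (singleton_subset_iff.2 A.mem_set)
    rw [CP.set_injective (hAq.trans CP.set_singleton.symm)]
  | @attach B i J v w hB hJ hJB _ ih =>
    rw [iUnion_update_union] at hA
    obtain ⟨A', hA', hAA'⟩ := A.exists_joined_of_subset_union_arc
      (isClosed_iUnion_of_finite hB.isClosed) (mem_iUnion_of_mem i (hB.mem i)) hJ hJB hA
    exact hAA'.trans (ih A' hA')

end IsArborescence

end Deformation

section Trees

/-- `𝒜` is a finite cover of `Y` by arcs any two of which meet only in common end points. -/
structure IsArcDecomposition {Y : Type*} [TopologicalSpace Y] (𝒜 : Set (Set Y)) : Prop where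
  finite : 𝒜.Finite
  isArcSet : ∀ A ∈ 𝒜, IsArcSet A
  sUnion_eq : ⋃₀ 𝒜 = univ
  isArcEndpoint : ∀ A ∈ 𝒜, ∀ B ∈ 𝒜, A ≠ B → ∀ x ∈ A, x ∈ B → IsArcEndpoint A x

theorem IsFiniteGraph.exists_isArcDecomposition {Y : Type u} [MetricSpace Y]
    (h : IsFiniteGraph Y) : ∃ 𝒜 : Set (Set Y), IsArcDecomposition 𝒜 := by
  obtain ⟨-, -, -, 𝒜, harc, hcover, hend⟩ := h
  exact ⟨𝒜, 𝒜.finite_toSet, harc, hcover, fun A hA B hB hAB x hxA hxB =>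
    (hend A hA B hB hAB x ⟨hxA, hxB⟩).1⟩

section

variable {Y : Type*} [TopologicalSpace Y] {𝒜 : Set (Set Y)} {A₁ A₂ : Set Y}
  {a b q v w x y : Y}

theorem IsArcDecomposition.exists_mem (h : IsArcDecomposition 𝒜) (x : Y) : ∃ A ∈ 𝒜, x ∈ A :=
  mem_sUnion.1 (h.sUnion_eq ▸ mem_univ x)

open Classical in
theorem IsArborescence.exists_insert {B : ↥{J ∈ 𝒜 | q ∈ J} → Set Y} {S : Set (Set Y)}
    (hB : IsArborescence q B) (hBS : ∀ i, i.1 ∈ S → i.1 ⊆ B i)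
    (hBu : ⋃ i, B i = insert q (⋃₀ S)) {J : Set Y} (hJ : J ∈ 𝒜) (hvw : IsArcFromTo J v w)
    (hJv : J ∩ insert q (⋃₀ S) = {v}) :
    ∃ B' : ↥{J ∈ 𝒜 | q ∈ J} → Set Y, IsArborescence q B' ∧
      (∀ i, i.1 ∈ insert J S → i.1 ⊆ B' i) ∧ ⋃ i, B' i = insert q (⋃₀ insert J S) := by
  obtain ⟨i, hvi, hi⟩ : ∃ i, v ∈ B i ∧ (q ∈ J → i.1 = J) := by
    by_cases hqJ : q ∈ J
    · obtain rfl : q = v := hJv.subset ⟨hqJ, .inl rfl⟩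
      exact ⟨⟨J, hJ, hqJ⟩, hB.mem _, fun _ => rfl⟩
    · obtain ⟨i, hi⟩ := mem_iUnion.1 (hBu.superset (hJv.superset rfl).2)
      exact ⟨i, hi, fun h => absurd h hqJ⟩
  refine ⟨Function.update B i (B i ∪ J), hB.attach hvw (hBu ▸ hJv) hvi, fun j hj => ?_, ?_⟩
  · rw [Function.update_apply]
    split_ifs with hji
    · subst hji
      rcases hj with hj | hj
      · exact hj ▸ subset_union_right
      · exact (hBS j hj).trans subset_union_left
    · exact hBS j (hj.resolve_left fun hjJ =>
        hji (Subtype.ext (hjJ.trans (hi (hjJ ▸ j.2.2)).symm)))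
  · rw [iUnion_update_union, hBu, sUnion_insert, insert_union, union_comm]

variable [T2Space Y]

theorem IsArcFromTo.isArcEndpoint_left_of_union (h₁ : IsArcFromTo A₁ a x)
    (h₂ : IsArcFromTo A₂ x b) (hx : A₁ ∩ A₂ = {x}) (hy : IsArcEndpoint (A₁ ∪ A₂) y)
    (hy₁ : y ∈ A₁) : IsArcEndpoint A₁ y := by
  rcases (h₁.union h₂ hx).eq_or_eq_of_isArcEndpoint hy with rfl | rfl
  · exact h₁.isArcEndpoint
  · exact absurd (hx.subset ⟨hy₁, h₂.right_mem⟩).symm h₂.ne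

theorem IsArcFromTo.isArcEndpoint_right_of_union (h₁ : IsArcFromTo A₁ a x)
    (h₂ : IsArcFromTo A₂ x b) (hx : A₁ ∩ A₂ = {x}) (hy : IsArcEndpoint (A₁ ∪ A₂) y)
    (hy₂ : y ∈ A₂) : IsArcEndpoint A₂ y :=
  h₂.symm.isArcEndpoint_left_of_union h₁.symm ((inter_comm _ _).trans hx)
    (union_comm A₁ A₂ ▸ hy) hy₂

namespace IsArcDecomposition

theorem isClosed_sUnion (h : IsArcDecomposition 𝒜) {S : Set (Set Y)} (hS : S ⊆ 𝒜) :
    IsClosed (⋃₀ S) := by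
  rw [sUnion_eq_biUnion]
  exact (h.finite.subset hS).isClosed_biUnion fun A hA =>
    (h.isArcSet A (hS hA)).isCompact.isClosed

theorem subdivide (h : IsArcDecomposition 𝒜) (h₁ : IsArcFromTo A₁ a x)
    (h₂ : IsArcFromTo A₂ x b) (hx : A₁ ∩ A₂ = {x}) (hA : A₁ ∪ A₂ ∈ 𝒜) :
    IsArcDecomposition ({A₁, A₂} ∪ 𝒜 \ {A₁ ∪ A₂}) where
  finite := (toFinite _).union h.finite.sdiff
  isArcSet := by
    rintro C ((rfl | rfl) | ⟨hC, -⟩)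
    · exact h₁.isArcSet
    · exact h₂.isArcSet
    · exact h.isArcSet C hC
  sUnion_eq := by
    refine eq_univ_of_forall fun y => ?_
    obtain ⟨C, hC, hy⟩ := h.exists_mem y
    by_cases hCA : C = A₁ ∪ A₂
    · rcases hCA ▸ hy with hy | hy
      · exact ⟨A₁, .inl (.inl rfl), hy⟩
      · exact ⟨A₂, .inl (.inr rfl), hy⟩
    · exact ⟨C, .inr ⟨hC, hCA⟩, hy⟩
  isArcEndpoint := by
    rintro C ((rfl | rfl) | ⟨hC, hCA⟩) D ((rfl | rfl) | ⟨hD, hDA⟩) hCD y hyC hyD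
    · exact absurd rfl hCD
    · exact hx.subset ⟨hyC, hyD⟩ ▸ h₁.symm.isArcEndpoint
    · exact h₁.isArcEndpoint_left_of_union h₂ hx
        (h.isArcEndpoint _ hA D hD (Ne.symm hDA) y (.inl hyC) hyD) hyC
    · exact hx.subset ⟨hyD, hyC⟩ ▸ h₂.isArcEndpoint
    · exact absurd rfl hCD
    · exact h₁.isArcEndpoint_right_of_union h₂ hx
        (h.isArcEndpoint _ hA D hD (Ne.symm hDA) y (.inr hyC) hyD) hyC
    · exact h.isArcEndpoint C hC _ hA hCA y hyC (.inl hyD)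
    · exact h.isArcEndpoint C hC _ hA hCA y hyC (.inr hyD)
    · exact h.isArcEndpoint C hC D hD hCD y hyC hyD

theorem exists_forall_isArcEndpoint (h : IsArcDecomposition 𝒜) (q : Y) :
    ∃ ℬ : Set (Set Y), IsArcDecomposition ℬ ∧ ∀ A ∈ ℬ, q ∈ A → IsArcEndpoint A q := by
  by_contra! hq
  obtain ⟨A, hA, hqA, hqend⟩ := hq 𝒜 h
  obtain ⟨a, b, hab⟩ := (h.isArcSet A hA).exists_isArcFromTo
  obtain ⟨A₁, A₂, h₁, h₂, rfl, hinter⟩ := hab.exists_split hqA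
    (fun hqa => hqend (hqa ▸ hab.isArcEndpoint)) fun hqb => hqend (hqb ▸ hab.symm.isArcEndpoint)
  obtain ⟨C, (rfl | rfl) | ⟨hC, hCA⟩, hqC, hqC'⟩ := hq _ (h.subdivide h₁ h₂ hinter hA)
  · exact hqC' h₁.symm.isArcEndpoint
  · exact hqC' h₂.isArcEndpoint
  · exact hqC' (h.isArcEndpoint C hC _ hA hCA q hqC hqA)

theorem exists_inter_nonempty [PreconnectedSpace Y] (h : IsArcDecomposition 𝒜)
    {S : Set (Set Y)} (hS : S ⊂ 𝒜) :
    ∃ J ∈ 𝒜 \ S, (J ∩ insert q (⋃₀ S)).Nonempty := by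
  obtain ⟨J₀, hJ₀⟩ := nonempty_of_ssubset hS
  obtain ⟨x₀, hx₀⟩ := (h.isArcSet J₀ hJ₀.1).nontrivial.nonempty
  have hcover : univ ⊆ insert q (⋃₀ S) ∪ ⋃₀ (𝒜 \ S) := by
    intro x _
    obtain ⟨J, hJ, hx⟩ := h.exists_mem x
    by_cases hJS : J ∈ S
    · exact .inl (.inr ⟨J, hJS, hx⟩)
    · exact .inr ⟨J, ⟨hJ, hJS⟩, hx⟩
  obtain ⟨x, -, hxS, J, hJ, hxJ⟩ := isPreconnected_closed_iff.1 isPreconnected_univ _ _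
    (isClosed_singleton.union (h.isClosed_sUnion hS.1)) (h.isClosed_sUnion sdiff_subset) hcover
    ⟨q, mem_univ q, .inl rfl⟩ ⟨x₀, mem_univ x₀, J₀, hJ₀, hx₀⟩
  exact ⟨J, hJ, x, hxJ, hxS⟩

/-- A second intersection point would be the other end point of the arc, which would close up
to a simple closed curve. -/
theorem exists_isArcFromTo_inter_eq [PreconnectedSpace Y] (h : IsArcDecomposition 𝒜)
    (hq : ∀ A ∈ 𝒜, q ∈ A → IsArcEndpoint A q) (hacyclic : ∀ C : Set Y, ¬ IsSimpleClosedCurve C)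
    {S : Set (Set Y)} (hS : S ⊂ 𝒜) (hconn : IsArcwiseConnected (insert q (⋃₀ S))) :
    ∃ J ∈ 𝒜 \ S, ∃ v w, IsArcFromTo J v w ∧ J ∩ insert q (⋃₀ S) = {v} := by
  obtain ⟨J, hJ, v, hvJ, hvS⟩ := h.exists_inter_nonempty (q := q) hS
  have hend : ∀ x ∈ J, x ∈ insert q (⋃₀ S) → IsArcEndpoint J x := by
    rintro x hxJ (rfl | ⟨A, hA, hxA⟩)
    · exact hq J hJ.1 hxJ
    · exact h.isArcEndpoint J hJ.1 A (hS.1 hA) (fun hJA => hJ.2 (hJA ▸ hA)) x hxJ hxA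
  obtain ⟨w, hvw⟩ := hend v hvJ hvS
  have hwS : w ∉ insert q (⋃₀ S) := by
    intro hwS
    obtain ⟨C, hC, hwv⟩ := hconn w hwS v hvS hvw.ne.symm
    exact hacyclic _ (hvw.isSimpleClosedCurve hwv fun x hx =>
      hvw.eq_or_eq_of_isArcEndpoint (hend x hx.1 (hC hx.2)))
  refine ⟨J, hJ, v, w, hvw, Subset.antisymm ?_ (singleton_subset_iff.2 ⟨hvJ, hvS⟩)⟩
  rintro x ⟨hxJ, hxS⟩
  exact (hvw.eq_or_eq_of_isArcEndpoint (hend x hxJ hxS)).resolve_right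
    fun hxw => hwS (hxw ▸ hxS)

open Classical in
theorem exists_isArborescence [PreconnectedSpace Y] (h : IsArcDecomposition 𝒜)
    (hq : ∀ A ∈ 𝒜, q ∈ A → IsArcEndpoint A q) (hacyclic : ∀ C : Set Y, ¬ IsSimpleClosedCurve C) :
    ∃ B : ↥{J ∈ 𝒜 | q ∈ J} → Set Y, IsArborescence q B ∧ (∀ i, i.1 ⊆ B i) ∧
      ⋃ i, B i = univ := by
  let IsGrown (S : Set (Set Y)) : Prop := ∃ B : ↥{J ∈ 𝒜 | q ∈ J} → Set Y,
    IsArborescence q B ∧ (∀ i, i.1 ∈ S → i.1 ⊆ B i) ∧ ⋃ i, B i = insert q (⋃₀ S)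
  obtain ⟨J₀, hJ₀, hqJ₀⟩ := h.exists_mem q
  have : Nonempty ↥{J ∈ 𝒜 | q ∈ J} := ⟨⟨J₀, hJ₀, hqJ₀⟩⟩
  have hempty : IsGrown ∅ := ⟨fun _ => {q}, .base, by simp, by simp⟩
  have hinsert : ∀ S ⊂ 𝒜, IsGrown S → ∃ J ∈ 𝒜 \ S, IsGrown (insert J S) := by
    rintro S hS ⟨B, hB, hBS, hBu⟩
    obtain ⟨J, hJ, v, w, hvw, hJv⟩ :=
      h.exists_isArcFromTo_inter_eq hq hacyclic hS (hBu ▸ hB.isArcwiseConnected_iUnion)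
    exact ⟨J, hJ, hB.exists_insert hBS hBu hJ.1 hvw hJv⟩
  obtain ⟨B, hB, hB𝒜, hBu⟩ := h.finite.induction_to ∅ (empty_subset 𝒜) hempty hinsert
  refine ⟨B, hB, fun i => hB𝒜 i i.2.1, ?_⟩
  rw [hBu, h.sUnion_eq, insert_eq_of_mem (mem_univ q)]

theorem hasOrdIn (h : IsArcDecomposition 𝒜) (hq : ∀ A ∈ 𝒜, q ∈ A → IsArcEndpoint A q)
    (hinter : ∀ i j : ↥{J ∈ 𝒜 | q ∈ J}, i ≠ j → i.1 ∩ j.1 = {q}) :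
    HasOrdIn univ q (Nat.card ↥{J ∈ 𝒜 | q ∈ J}) := by
  have : Finite ↥{J ∈ 𝒜 | q ∈ J} := h.finite.subset (sep_subset _ _)
  obtain ⟨J₀, hJ₀, hqJ₀⟩ := h.exists_mem q
  have : Nonempty ↥{J ∈ 𝒜 | q ∈ J} := ⟨⟨J₀, hJ₀, hqJ₀⟩⟩
  let e := (Finite.equivFin ↥{J ∈ 𝒜 | q ∈ J}).symm
  refine ⟨⋃₀ {J ∈ 𝒜 | q ∈ J}, subset_univ _, h.isClosed_sUnion (sep_subset _ _),
    ⟨(⋃₀ {J ∈ 𝒜 | q ∉ J})ᶜ, (h.isClosed_sUnion (sep_subset _ _)).isOpen_compl, ?_, ?_⟩,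
    Nat.card_pos, fun k => (e k).1, fun k => h.isArcSet _ (e k).2.1, ?_,
    fun k => hq _ (e k).2.1 (e k).2.2, fun j k hjk => hinter _ _ (e.injective.ne hjk)⟩
  · rintro ⟨J, hJ, hqJ⟩
    exact hJ.2 hqJ
  · rintro x ⟨hx, -⟩
    obtain ⟨J, hJ, hxJ⟩ := h.exists_mem x
    by_contra hx'
    by_cases hqJ : q ∈ J
    · exact hx' ⟨J, ⟨hJ, hqJ⟩, hxJ⟩
    · exact hx ⟨J, ⟨hJ, hqJ⟩, hxJ⟩
  · rw [sUnion_eq_iUnion]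
    exact e.surjective.iUnion_comp fun i => i.1

end IsArcDecomposition

end

variable {Y : Type u} [MetricSpace Y]

open Classical in
theorem IsTree.exists_isArborescence (hY : IsTree Y) (q : Y) :
    ∃ 𝒜 : Set (Set Y), IsArcDecomposition 𝒜 ∧ (∀ A ∈ 𝒜, q ∈ A → IsArcEndpoint A q) ∧
      ∃ B : ↥{J ∈ 𝒜 | q ∈ J} → Set Y, IsArborescence q B ∧ (∀ i, i.1 ⊆ B i) ∧
        ⋃ i, B i = univ := by
  have := hY.1.2.1
  obtain ⟨𝒜₀, h𝒜₀⟩ := hY.1.exists_isArcDecomposition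
  obtain ⟨𝒜, h𝒜, hq⟩ := h𝒜₀.exists_forall_isArcEndpoint q
  exact ⟨𝒜, h𝒜, hq, h𝒜.exists_isArborescence hq hY.2⟩

theorem IsTree.pathConnectedSpace (hY : IsTree Y) (q : Y) : PathConnectedSpace (CP Y q) := by
  obtain ⟨𝒜, h𝒜, -, B, hB, -, hBu⟩ := hY.exists_isArborescence q
  have : Finite ↥{J ∈ 𝒜 | q ∈ J} := h𝒜.finite.subset (sep_subset _ _)
  have hjoined : ∀ A : CP Y q, Joined A (CP.singleton q) := fun A =>
    hB.joined_singleton A (hBu ▸ subset_univ _)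
  exact ⟨⟨CP.singleton q⟩, fun A A' => (hjoined A).trans (hjoined A').symm⟩

theorem IsTree.exists_isBranching (hY : IsTree Y) (q : Y) :
    ∃ (n : ℕ) (B : Fin n → Set Y), HasOrdIn univ q n ∧ IsBranching B q := by
  obtain ⟨𝒜, h𝒜, hq, B, hB, hAB, hBu⟩ := hY.exists_isArborescence q
  have : Finite ↥{J ∈ 𝒜 | q ∈ J} := h𝒜.finite.subset (sep_subset _ _)
  let e := (Finite.equivFin ↥{J ∈ 𝒜 | q ∈ J}).symm
  refine ⟨_, fun k => B (e k), h𝒜.hasOrdIn hq fun i j hij => ?_, fun k => hB.isClosed _,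
    fun k => hB.mem _, fun k => (h𝒜.isArcSet _ (e k).2.1).nontrivial.mono (hAB _),
    fun j k hjk => hB.inter_eq (e.injective.ne hjk), (e.surjective.iUnion_comp B).trans hBu⟩
  refine Subset.antisymm ?_ (singleton_subset_iff.2 ⟨i.2.2, j.2.2⟩)
  exact (inter_subset_inter (hAB i) (hAB j)).trans (hB.inter_eq hij).subset

end Trees

section Order

variable {X Y : Type u} [MetricSpace X] [MetricSpace Y] {p : X} {q : Y}

theorem IsBranching.card_le_of_hasOrdIn [CompactSpace Y] [ConnectedSpace Y]
    [PathConnectedSpace (CP Y q)] {ι : Type*} [Fintype ι] {B : ι → Set Y}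
    (hB : IsBranching B q) (e : CP X p ≃ₜ CP Y q) {n : ℕ} (hn : HasOrdIn univ p n) :
    Fintype.card ι ≤ n := by
  obtain ⟨W, hW, hWne, φ, hφ, hφW⟩ := hn.exists_continuous_injOn
  obtain ⟨g, hg, hgW, hgne⟩ := hB.exists_cube (hW.preimage e.symm.continuous)
    (hWne.preimage e.symm.surjective)
  by_contra! hlt
  obtain ⟨i, x, y, hx, hy, hxy⟩ := exists_opposite_faces_eq (by simpa using hlt)
    (hφ.comp (e.symm.continuous.comp hg))
  exact hgne i x y hx hy (e.symm.injective (hφW (hgW x) (hgW y) hxy))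

theorem IsTree.hasOrdIn_ordIn (hX : IsTree X) (p : X) : HasOrdIn univ p (ordIn univ p) := by
  obtain ⟨n, -, hn, -⟩ := hX.exists_isBranching p
  exact Nat.sInf_mem (s := {n | HasOrdIn univ p n}) ⟨n, hn⟩

theorem IsTree.ordIn_le (hX : IsTree X) (hY : IsTree Y) (e : CP X p ≃ₜ CP Y q) :
    ordIn (univ : Set Y) q ≤ ordIn (univ : Set X) p := by
  have := hY.1.1
  have := hY.1.2.1
  have := hY.pathConnectedSpace q
  obtain ⟨n, B, hn, hB⟩ := hY.exists_isBranching q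
  calc ordIn univ q ≤ n := Nat.sInf_le hn
    _ = Fintype.card (Fin n) := (Fintype.card_fin n).symm
    _ ≤ ordIn univ p := hB.card_le_of_hasOrdIn e (hX.hasOrdIn_ordIn p)

end Order

theorem statement7 {X Y : Type u} [MetricSpace X] [MetricSpace Y]
    (hX : IsTree X) (hY : IsTree Y) (p : X) (q : Y)
    (h : Nonempty (CP X p ≃ₜ CP Y q)) :
    ordIn (univ : Set X) p = ordIn (univ : Set Y) q := by
  obtain ⟨e⟩ := h
  exact (hY.ordIn_le hX e.symm).antisymm (hX.ordIn_le hY e)
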